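/- arXiv:1306.0323 — 8 statements merged into one kernel-verified Lean document; each statement's English description precedes it below -/
import Mathlib

section
/- Let λ ∈ ℂ with Im λ ≠ 0 and let (φ, u) be a solution of −(pφ')' + qφ = λwφ on [a,b] satisfying separated self-adjoint boundary conditions u(a) = l·φ(a), u(b) = r·φ(b) with l, r ∈ ℝ. Then ∫ₐᵇ w(t)|φ(t)|² dt = 0. -/
open MeasureTheory Real Complex

/-- Product rule in integrated form for real primitives of integrable functions. -/
theorem sl_parts {a b : ℝ} (hab : a < b) {f g F G : ℝ → ℝ}
    (hF : IntervalIntegrable F volume a b) (hG : IntervalIntegrable G volume a b)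
    (hf : ∀ x ∈ Set.Icc a b, f x = f a + ∫ t in a..x, F t)
    (hg : ∀ x ∈ Set.Icc a b, g x = g a + ∫ t in a..x, G t) :
    IntervalIntegrable (fun x => F x * g x + f x * G x) volume a b ∧
    ∫ x in a..b, (F x * g x + f x * G x) = f b * g b - f a * g a := by
  have cst : ∀ c : ℝ, AbsolutelyContinuousOnInterval (fun _ : ℝ => c) a b := fun c =>
    ((LipschitzWith.const c).lipschitzOnWith (s := Set.uIcc a b)).absolutelyContinuousOnInterval
  have acf := (cst (f a)).add
    (hF.absolutelyContinuousOnInterval_intervalIntegral (c := a) (by simp))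
  have acg := (cst (g a)).add
    (hG.absolutelyContinuousOnInterval_intervalIntegral (c := a) (by simp))
  have hu : Set.uIcc a b = Set.Icc a b := Set.uIcc_of_le hab.le
  have cf : ContinuousOn f (Set.uIcc a b) :=
    acf.continuousOn.congr (fun x hx => hf x (hu ▸ hx))
  have cg : ContinuousOn g (Set.uIcc a b) :=
    acg.continuousOn.congr (fun x hx => hg x (hu ▸ hx))
  refine ⟨(hF.mul_continuousOn cg).add (hG.continuousOn_mul cf), ?_⟩
  have key := acf.integral_deriv_mul_eq_sub acg
  simp only [Pi.add_apply] at key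
  rw [← hf b ⟨hab.le, le_rfl⟩, ← hg b ⟨hab.le, le_rfl⟩, ← hf a ⟨le_rfl, hab.le⟩,
    ← hg a ⟨le_rfl, hab.le⟩] at key
  rw [← key]
  apply intervalIntegral.integral_congr_ae
  filter_upwards [hF.ae_hasDerivAt_integral, hG.ae_hasDerivAt_integral] with x h1 h2 h3
  have hx : x ∈ Set.uIcc a b := Set.uIoc_subset_uIcc h3
  have d1 := ((hasDerivAt_const x (f a)).add (h1 hx a (by simp))).deriv
  have d2 := ((hasDerivAt_const x (g a)).add (h2 hx a (by simp))).deriv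
  rw [d1, d2, ← hf x (hu ▸ hx), ← hg x (hu ▸ hx)]
  ring

theorem sl_re_im {a b : ℝ} {f F : ℝ → ℂ}
    (hF : IntervalIntegrable F volume a b)
    (hf : ∀ x ∈ Set.Icc a b, f x = f a + ∫ t in a..x, F t) :
    (IntervalIntegrable (fun x => (F x).re) volume a b ∧
      IntervalIntegrable (fun x => (F x).im) volume a b) ∧
    (∀ x ∈ Set.Icc a b, (f x).re = (f a).re + ∫ t in a..x, (F t).re) ∧
    (∀ x ∈ Set.Icc a b, (f x).im = (f a).im + ∫ t in a..x, (F t).im) := by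
  have sub : ∀ x ∈ Set.Icc a b, IntervalIntegrable F volume a x := fun x hx =>
    hF.mono_set (by
      rw [Set.uIcc_of_le hx.1, Set.uIcc_of_le (hx.1.trans hx.2)]
      exact Set.Icc_subset_Icc le_rfl hx.2)
  refine ⟨⟨⟨hF.1.re, hF.2.re⟩, ⟨hF.1.im, hF.2.im⟩⟩, fun x hx => ?_, fun x hx => ?_⟩
  · have h := Complex.reCLM.intervalIntegral_comp_comm (sub x hx)
    simp only [Complex.reCLM_apply] at h
    rw [h, ← Complex.add_re, ← hf x hx]
  · have h := Complex.imCLM.intervalIntegral_comp_comm (sub x hx)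
    simp only [Complex.imCLM_apply] at h
    rw [h, ← Complex.add_im, ← hf x hx]

/-- Identity (5.1) of the paper: if λ is non-real and (φ, u) is a solution of
−(pφ')' + qφ = λwφ satisfying separated self-adjoint boundary conditions,
then ∫ₐᵇ w|φ|² = 0. -/
theorem sl_nonreal_weight_integral_zero
    (a b : ℝ) (hab : a < b) (p q w : ℝ → ℝ)
    (hpm : Measurable p) (hqm : Measurable q) (hwm : Measurable w)
    (hp_pos : ∀ᵐ x ∂(volume.restrict (Set.Ioc a b)), 0 < p x)
    (hp_int : IntegrableOn (fun x => 1 / p x) (Set.Ioc a b))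
    (hq_int : IntegrableOn q (Set.Ioc a b))
    (hw_int : IntegrableOn w (Set.Ioc a b))
    (hw_ne : ∀ᵐ x ∂(volume.restrict (Set.Ioc a b)), w x ≠ 0)
    (lam : ℂ) (hlam : lam.im ≠ 0) (φ u : ℝ → ℂ)
    (hφc : ContinuousOn φ (Set.Icc a b)) (huc : ContinuousOn u (Set.Icc a b))
    (hφ : ∀ x ∈ Set.Icc a b, φ x = φ a + ∫ t in a..x, u t / (p t : ℂ))
    (hu : ∀ x ∈ Set.Icc a b, u x = u a + ∫ t in a..x, ((q t : ℂ) - lam * (w t : ℂ)) * φ t)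
    (l r : ℝ) (hbca : u a = (l : ℂ) * φ a) (hbcb : u b = (r : ℂ) * φ b) :
    ∫ t in a..b, w t * ‖φ t‖ ^ 2 = 0 := by
  have hIcc : Set.uIcc a b = Set.Icc a b := Set.uIcc_of_le hab.le
  have toII : ∀ {f : ℝ → ℝ}, IntegrableOn f (Set.Ioc a b) →
      IntervalIntegrable (fun x => (f x : ℂ)) volume a b := fun {f} h =>
    (intervalIntegrable_iff_integrableOn_Ioc_of_le hab.le).2 h.ofReal
  have hF : IntervalIntegrable (fun t => u t / (p t : ℂ)) volume a b := by
    have := (toII hp_int).continuousOn_mul (hIcc ▸ huc)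
    refine this.congr (fun x _ => ?_)
    simp [div_eq_mul_inv]
  have hG : IntervalIntegrable (fun t => ((q t : ℂ) - lam * (w t : ℂ)) * φ t) volume a b :=
    ((toII hq_int).sub ((toII hw_int).const_mul lam)).mul_continuousOn (hIcc ▸ hφc)
  obtain ⟨⟨iFr, iFi⟩, fr, fi⟩ := sl_re_im hF hφ
  obtain ⟨⟨iGr, iGi⟩, gr, gi⟩ := sl_re_im hG hu
  obtain ⟨i1, e1⟩ := sl_parts hab iFr iGi fr gi
  obtain ⟨i2, e2⟩ := sl_parts hab iFi iGr fi gr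
  have e := intervalIntegral.integral_sub i1 i2
  rw [e1, e2, hbca, hbcb] at e
  have e3 : ∫ t in a..b, (-lam.im) * (w t * ‖φ t‖ ^ 2) = 0 := by
    trans
    · refine (intervalIntegral.integral_congr (fun x _ => ?_)).trans e
      simp only [← Complex.normSq_eq_norm_sq, Complex.normSq_apply, Complex.div_ofReal_re,
        Complex.div_ofReal_im, Complex.mul_re, Complex.mul_im, Complex.sub_re, Complex.sub_im,
        Complex.ofReal_re, Complex.ofReal_im]
      ring
    · simp
      ring
  rw [intervalIntegral.integral_const_mul] at e3
  exact (mul_eq_zero.1 e3).resolve_left (neg_ne_zero.2 hlam)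
end

section
/- Let φ, u : [a,b] → ℂ be continuous with φ(x) = φ(a) + ∫ₐˣ u(t)/p(t) dt for all x ∈ [a,b], and suppose ∫ₐᵇ |u|²/p < ∞ and ∫ₐᵇ |φ|²/p < ∞. Then ‖φ‖_∞² ≤ 2‖φ'‖_{p,2}·‖φ‖_{1/p,2} + ‖1/p‖_{L¹}⁻¹·‖φ‖_{1/p,2}², where ‖φ'‖_{p,2} := (∫ₐᵇ |u|²/p)^{1/2}, ‖φ‖_{1/p,2} := (∫ₐᵇ |φ|²/p)^{1/2}, and ‖φ‖_∞ := sup_{x∈[a,b]} |φ(x)|. -/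
open MeasureTheory Real Complex

/-- Absolutely continuous primitive: properties. -/
lemma aux_prim (a b c : ℝ) (f : ℝ → ℝ) (hf : IntervalIntegrable f volume a b) :
    AbsolutelyContinuousOnInterval (fun x => c + ∫ t in a..x, f t) a b ∧
    ∀ᵐ x, x ∈ Set.uIcc a b → HasDerivAt (fun x => c + ∫ t in a..x, f t) (f x) x := by
  constructor
  · have h1 := hf.absolutelyContinuousOnInterval_intervalIntegral (c := a) (by simp)
    have h2 : AbsolutelyContinuousOnInterval (fun _ : ℝ => c) a b := by
      simpa [AbsolutelyContinuousOnInterval] using tendsto_const_nhds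
    exact h2.add h1
  · filter_upwards [hf.ae_hasDerivAt_integral] with x hx hxm
    exact (hx hxm a (by simp)).const_add c

/-- Cauchy-Schwarz with weight. -/
lemma aux_cs (a b : ℝ) (hab : a < b) (q f g : ℝ → ℝ)
    (hq : ∀ᵐ x ∂(volume.restrict (Set.Ioc a b)), 0 ≤ q x)
    (hff : IntervalIntegrable (fun t => f t ^ 2 * q t) volume a b)
    (hfg : IntervalIntegrable (fun t => f t * g t * q t) volume a b)
    (hgg : IntervalIntegrable (fun t => g t ^ 2 * q t) volume a b) :
    ∫ t in a..b, f t * g t * q t ≤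
      Real.sqrt (∫ t in a..b, f t ^ 2 * q t) * Real.sqrt (∫ t in a..b, g t ^ 2 * q t) := by
  have nn : ∀ k : ℝ → ℝ, 0 ≤ ∫ t in a..b, k t ^ 2 * q t := fun k => by
    apply intervalIntegral.integral_nonneg_of_ae_restrict hab.le
    rw [Measure.restrict_congr_set Ioc_ae_eq_Icc.symm]
    filter_upwards [hq] with x hx
    exact mul_nonneg (sq_nonneg _) hx
  have key : ∀ s : ℝ, 0 ≤ (∫ t in a..b, f t ^ 2 * q t) * (s * s)
      + (-2 * ∫ t in a..b, f t * g t * q t) * s + ∫ t in a..b, g t ^ 2 * q t := by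
    intro s
    have h := nn (fun t => s * f t - g t)
    have e : (∫ t in a..b, (s * f t - g t) ^ 2 * q t) =
        ∫ t in a..b, ((s * s) * (f t ^ 2 * q t) + (-2 * s) * (f t * g t * q t))
          + g t ^ 2 * q t := by
      congr 1; ext t; ring
    rw [e, intervalIntegral.integral_add ((hff.const_mul _).add (hfg.const_mul _)) hgg,
      intervalIntegral.integral_add (hff.const_mul _) (hfg.const_mul _),
      intervalIntegral.integral_const_mul, intervalIntegral.integral_const_mul] at h
    linarith
  have d := discrim_le_zero key
  rw [discrim] at d
  rw [← Real.sqrt_mul (nn f)]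
  apply Real.le_sqrt_of_sq_le
  nlinarith


/-- Estimate (5.4) of the paper:
‖φ‖_∞² ≤ 2‖φ'‖_{p,2}·‖φ‖_{1/p,2} + ‖1/p‖_{L¹}⁻¹·‖φ‖_{1/p,2}²,
where u = pφ' is the quasi-derivative of φ. -/
theorem sup_norm_squared_estimate
    (a b : ℝ) (hab : a < b) (p : ℝ → ℝ)
    (hpm : Measurable p)
    (hp_pos : ∀ᵐ x ∂(volume.restrict (Set.Ioc a b)), 0 < p x)
    (hp_int : IntegrableOn (fun x => 1 / p x) (Set.Ioc a b))
    (φ u : ℝ → ℂ)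
    (hφc : ContinuousOn φ (Set.Icc a b)) (huc : ContinuousOn u (Set.Icc a b))
    (hφ : ∀ x ∈ Set.Icc a b, φ x = φ a + ∫ t in a..x, u t / (p t : ℂ))
    (hu2 : IntegrableOn (fun t => ‖u t‖ ^ 2 / p t) (Set.Ioc a b))
    (hφ2 : IntegrableOn (fun t => ‖φ t‖ ^ 2 / p t) (Set.Ioc a b)) :
    (sSup ((fun x => ‖φ x‖) '' Set.Icc a b)) ^ 2
      ≤ 2 * Real.sqrt (∫ t in a..b, ‖u t‖ ^ 2 / p t)
            * Real.sqrt (∫ t in a..b, ‖φ t‖ ^ 2 / p t)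
        + (∫ t in a..b, 1 / p t)⁻¹ * (∫ t in a..b, ‖φ t‖ ^ 2 / p t) := by
  have hpi : IntervalIntegrable (fun x => 1 / p x) volume a b :=
    (intervalIntegrable_iff_integrableOn_Ioc_of_le hab.le).2 hp_int
  have hui : Set.uIcc a b = Set.Icc a b := Set.uIcc_of_le hab.le
  have hw : IntervalIntegrable (fun t => u t / (p t : ℂ)) volume a b := by
    have h1 : IntervalIntegrable (fun x => ((1 / p x : ℝ) : ℂ)) volume a b :=
      ⟨hpi.1.ofReal, hpi.2.ofReal⟩
    refine (h1.continuousOn_mul (g := u) (by rwa [hui])).congr (fun x _ => ?_)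
    push_cast; ring
  have hwr : IntervalIntegrable (fun t => (u t / (p t : ℂ)).re) volume a b :=
    ⟨hw.1.re, hw.2.re⟩
  have hwi : IntervalIntegrable (fun t => (u t / (p t : ℂ)).im) volume a b :=
    ⟨hw.1.im, hw.2.im⟩
  obtain ⟨acR, dR⟩ := aux_prim a b (φ a).re _ hwr
  obtain ⟨acI, dI⟩ := aux_prim a b (φ a).im _ hwi
  have hsub : ∀ x ∈ Set.Icc a b, IntervalIntegrable (fun t => u t / (p t : ℂ)) volume a x := by
    intro x hx
    apply hw.mono_set
    rw [hui, Set.uIcc_of_le hx.1]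
    exact Set.Icc_subset_Icc_right hx.2
  have hR : ∀ x ∈ Set.Icc a b, (φ x).re = (φ a).re + ∫ t in a..x, (u t / (p t : ℂ)).re := by
    intro x hx
    rw [hφ x hx, Complex.add_re]
    congr 1
    exact (Complex.reCLM.intervalIntegral_comp_comm (hsub x hx)).symm
  have hI : ∀ x ∈ Set.Icc a b, (φ x).im = (φ a).im + ∫ t in a..x, (u t / (p t : ℂ)).im := by
    intro x hx
    rw [hφ x hx, Complex.add_im]
    congr 1
    exact (Complex.imCLM.intervalIntegral_comp_comm (hsub x hx)).symm
  set R : ℝ → ℝ := fun x => (φ a).re + ∫ t in a..x, (u t / (p t : ℂ)).re with hRdef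
  set I : ℝ → ℝ := fun x => (φ a).im + ∫ t in a..x, (u t / (p t : ℂ)).im with hIdef
  have acG : AbsolutelyContinuousOnInterval (fun x => R x * R x + I x * I x) a b :=
    (acR.fun_mul acR).fun_add (acI.fun_mul acI)
  have hG : ∀ x ∈ Set.Icc a b, R x * R x + I x * I x = ‖φ x‖ ^ 2 := by
    intro x hx
    rw [← Complex.normSq_eq_norm_sq, Complex.normSq_apply, hR x hx, hI x hx]
  have hpos' : ∀ᵐ x, x ∈ Set.Ioc a b → 0 < p x := (ae_restrict_iff' measurableSet_Ioc).1 hp_pos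
  have dG : ∀ᵐ x, x ∈ Set.Ioc a b →
      ‖deriv (fun x => R x * R x + I x * I x) x‖ ≤ 2 * (‖φ x‖ * ‖u x‖ * (1 / p x)) := by
    filter_upwards [dR, dI, hpos'] with x h1 h2 h3 hx
    have hx' : x ∈ Set.Icc a b := Set.Ioc_subset_Icc_self hx
    have h1 := h1 (hui ▸ hx')
    have h2 := h2 (hui ▸ hx')
    have h3 := h3 hx
    rw [((h1.fun_mul h1).fun_add (h2.fun_mul h2)).deriv]
    have e1 : R x = (φ x).re := (hR x hx').symm
    have e2 : I x = (φ x).im := (hI x hx').symm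
    rw [e1, e2]
    have e3 : (u x / (p x : ℂ)).re * (φ x).re + (φ x).re * (u x / (p x : ℂ)).re +
        ((u x / (p x : ℂ)).im * (φ x).im + (φ x).im * (u x / (p x : ℂ)).im)
        = 2 * ((starRingEnd ℂ) (φ x) * (u x / (p x : ℂ))).re := by
      simp only [Complex.mul_re, Complex.conj_re, Complex.conj_im]; ring
    rw [e3, norm_mul]
    have e4 := Complex.abs_re_le_norm ((starRingEnd ℂ) (φ x) * (u x / (p x : ℂ)))
    rw [norm_mul, norm_div, RCLike.norm_conj, Complex.norm_real, Real.norm_of_nonneg h3.le] at e4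
    rw [Real.norm_of_nonneg (by norm_num : (0:ℝ) ≤ 2), Real.norm_eq_abs]
    calc _ ≤ 2 * (‖φ x‖ * (‖u x‖ / p x)) := by gcongr
      _ = _ := by ring
  have hnφ : ContinuousOn (fun x => ‖φ x‖) (Set.uIcc a b) := by rw [hui]; exact hφc.norm
  have hnu : ContinuousOn (fun x => ‖u x‖) (Set.uIcc a b) := by rw [hui]; exact huc.norm
  have iφu : IntervalIntegrable (fun x => ‖φ x‖ * ‖u x‖ * (1 / p x)) volume a b :=
    hpi.continuousOn_mul (hnφ.mul hnu)
  have iφφ : IntervalIntegrable (fun x => ‖φ x‖ ^ 2 * (1 / p x)) volume a b :=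
    hpi.continuousOn_mul (hnφ.pow 2)
  have iuu : IntervalIntegrable (fun x => ‖u x‖ ^ 2 * (1 / p x)) volume a b :=
    hpi.continuousOn_mul (hnu.pow 2)
  have cs := aux_cs a b hab (fun x => 1 / p x) (fun x => ‖φ x‖) (fun x => ‖u x‖)
    (by filter_upwards [hp_pos] with x hx; positivity) iφφ iφu iuu
  have ediv : ∀ k : ℝ → ℝ, (∫ t in a..b, k t / p t) = ∫ t in a..b, k t * (1 / p t) := by
    intro k; congr 1; ext t; ring
  rw [ediv (fun t => ‖u t‖ ^ 2), ediv (fun t => ‖φ t‖ ^ 2)]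
  have P : 0 < ∫ t in a..b, 1 / p t := by
    rw [intervalIntegral.integral_of_le hab.le]
    rw [setIntegral_pos_iff_support_of_nonneg_ae
      (by filter_upwards [hp_pos] with x hx; simp; positivity) hp_int]
    have : (Function.support (fun x => 1 / p x) ∩ Set.Ioc a b : Set ℝ) =ᵐ[volume] Set.Ioc a b := by
      filter_upwards [hpos'] with x hx
      apply propext
      constructor
      · exact fun h => h.2
      · intro h
        exact ⟨by have := hx h; simp [Function.mem_support, this.ne'], h⟩
    rw [measure_congr this]
    simp [hab]
  have osc : ∀ x ∈ Set.Icc a b, ∀ y ∈ Set.Icc a b, ‖φ x‖ ^ 2 - ‖φ y‖ ^ 2 ≤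
      2 * ∫ t in a..b, ‖φ t‖ * ‖u t‖ * (1 / p t) := by
    intro x hx y hy
    have hs : Set.uIcc y x ⊆ Set.uIcc a b := by
      rw [hui]; exact Set.uIcc_subset_Icc hy hx
    have hs' : Set.uIoc y x ⊆ Set.Ioc a b := by
      intro z hz
      rw [Set.mem_uIoc] at hz
      rcases hz with h | h
      · exact ⟨hy.1.trans_lt h.1, h.2.trans hx.2⟩
      · exact ⟨hx.1.trans_lt h.1, h.2.trans hy.2⟩
    have h := (acG.mono hs).integral_deriv_eq_sub
    simp only [hG x hx, hG y hy] at h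
    rw [← h]
    refine (le_abs_self _).trans ?_
    rw [← Real.norm_eq_abs]
    refine intervalIntegral.norm_integral_le_integral_norm_uIoc.trans ?_
    rw [← intervalIntegral.integral_const_mul, intervalIntegral.integral_of_le hab.le]
    have i2 : IntegrableOn (fun t => 2 * (‖φ t‖ * ‖u t‖ * (1 / p t))) (Set.Ioc a b) :=
      (intervalIntegrable_iff_integrableOn_Ioc_of_le hab.le).1 (iφu.const_mul 2)
    have i1 : IntegrableOn (fun t => ‖deriv (fun x => R x * R x + I x * I x) t‖) (Set.Ioc a b) :=
      ((intervalIntegrable_iff_integrableOn_Ioc_of_le hab.le).1 acG.intervalIntegrable_deriv).norm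
    calc _ ≤ ∫ t in Set.Ioc a b, ‖deriv (fun x => R x * R x + I x * I x) t‖ :=
          setIntegral_mono_set i1 (Filter.Eventually.of_forall fun _ => norm_nonneg _)
            (Filter.Eventually.of_forall hs')
      _ ≤ _ := integral_mono_ae i1 i2 ((ae_restrict_iff' measurableSet_Ioc).2 dG)
  obtain ⟨x, hx, hxs⟩ := isCompact_Icc.exists_sSup_image_eq (Set.nonempty_Icc.2 hab.le) hφc.norm
  rw [hxs]
  set A := Real.sqrt (∫ t in a..b, ‖u t‖ ^ 2 * (1 / p t))
  set B := Real.sqrt (∫ t in a..b, ‖φ t‖ ^ 2 * (1 / p t))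
  have fin : ∫ t in a..b, (‖φ x‖ ^ 2 - 2 * A * B) * (1 / p t) ≤
      ∫ t in a..b, ‖φ t‖ ^ 2 * (1 / p t) := by
    refine intervalIntegral.integral_mono_ae_restrict hab.le (hpi.const_mul _) iφφ ?_
    rw [Measure.restrict_congr_set Ioc_ae_eq_Icc.symm]
    filter_upwards [hp_pos, ae_restrict_mem measurableSet_Ioc] with y hy hym
    have := osc x hx y (Set.Ioc_subset_Icc_self hym)
    have h0 : 0 ≤ 1 / p y := by positivity
    refine mul_le_mul_of_nonneg_right ?_ h0
    nlinarith
  rw [intervalIntegral.integral_const_mul, ← le_div_iff₀ P] at fin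
  rw [inv_mul_eq_div]
  linarith
end

section
/- Let φ, u : [a,b] → ℂ be continuous with φ(x) = φ(a) + ∫ₐˣ u(t)/p(t) dt for all x ∈ [a,b], and suppose ∫ₐᵇ |u|²/p < ∞ and ∫ₐᵇ |φ|²/p < ∞. Assume moreover that ∫ₐᵇ w|φ|² = 0 and ∫ₐᵇ w ≠ 0, and set δ := 2 + 2‖w‖_{L¹}/|∫ₐᵇ w|. Then ‖φ‖_∞² ≤ δ·‖φ'‖_{p,2}·‖φ‖_{1/p,2}, where ‖φ'‖_{p,2} := (∫ₐᵇ |u|²/p)^{1/2}, ‖φ‖_{1/p,2} := (∫ₐᵇ |φ|²/p)^{1/2}, and ‖φ‖_∞ := sup_{x∈[a,b]} |φ(x)|. -/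
open MeasureTheory Real Complex

/-- Increment of the squared norm of a primitive. -/
lemma aux_normSq_incr (a b : ℝ) (hab : a ≤ b) (f φ : ℝ → ℂ)
    (hf : IntervalIntegrable f volume a b)
    (hφ : ∀ x ∈ Set.Icc a b, φ x = φ a + ∫ t in a..x, f t)
    (hg : IntervalIntegrable (fun t => ‖φ t‖ * ‖f t‖) volume a b)
    (x y : ℝ) (hx : x ∈ Set.Icc a b) (hy : y ∈ Set.Icc a b) (hyx : y ≤ x) :
    |‖φ x‖ ^ 2 - ‖φ y‖ ^ 2| ≤ 2 * ∫ t in a..b, ‖φ t‖ * ‖f t‖ := by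
  have hre : IntervalIntegrable (fun t => (f t).re) volume a b := ⟨hf.1.re, hf.2.re⟩
  have him : IntervalIntegrable (fun t => (f t).im) volume a b := ⟨hf.1.im, hf.2.im⟩
  have hconst : ∀ c : ℝ, AbsolutelyContinuousOnInterval (fun _ : ℝ => c) a b := fun c =>
    ((LipschitzWith.const c).lipschitzOnWith (s := Set.uIcc a b)).absolutelyContinuousOnInterval
  set R : ℝ → ℝ := fun x => (φ a).re + ∫ t in a..x, (f t).re with hR
  set I : ℝ → ℝ := fun x => (φ a).im + ∫ t in a..x, (f t).im with hI
  have hRac : AbsolutelyContinuousOnInterval R a b :=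
    (hconst _).add (hre.absolutelyContinuousOnInterval_intervalIntegral (by simp))
  have hIac : AbsolutelyContinuousOnInterval I a b :=
    (hconst _).add (him.absolutelyContinuousOnInterval_intervalIntegral (by simp))
  have hfx : ∀ x ∈ Set.Icc a b, IntervalIntegrable f volume a x := fun x hx =>
    hf.mono_set (by
      rw [Set.uIcc_of_le hx.1, Set.uIcc_of_le hab]; exact Set.Icc_subset_Icc_right hx.2)
  have hRe : ∀ x ∈ Set.Icc a b, R x = (φ x).re := by
    intro x hx
    rw [hφ x hx, Complex.add_re, hR]
    simp only
    congr 1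
    exact Complex.reCLM.intervalIntegral_comp_comm (hfx x hx)
  have hIm : ∀ x ∈ Set.Icc a b, I x = (φ x).im := by
    intro x hx
    rw [hφ x hx, Complex.add_im, hI]
    simp only
    congr 1
    exact Complex.imCLM.intervalIntegral_comp_comm (hfx x hx)
  have hNac : AbsolutelyContinuousOnInterval (fun x => R x * R x + I x * I x) a b :=
    (hRac.fun_mul hRac).add (hIac.fun_mul hIac)
  have hN : ∀ x ∈ Set.Icc a b, ‖φ x‖ ^ 2 = R x * R x + I x * I x := by
    intro x hx
    rw [hRe x hx, hIm x hx, Complex.sq_norm, Complex.normSq_apply]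
  have hsub : Set.uIcc y x ⊆ Set.uIcc a b := by
    rw [Set.uIcc_of_le hyx, Set.uIcc_of_le hab]
    exact Set.Icc_subset_Icc hy.1 hx.2
  have key := (hNac.mono hsub).integral_deriv_eq_sub
  rw [hN x hx, hN y hy, ← key]
  have hb : ∀ᵐ t, t ∈ Set.Ioc y x →
      ‖deriv (fun x => R x * R x + I x * I x) t‖ ≤ 2 * (‖φ t‖ * ‖f t‖) := by
    filter_upwards [hre.ae_hasDerivAt_integral, him.ae_hasDerivAt_integral] with t h1 h2 ht
    have htI : t ∈ Set.Icc a b := ⟨hy.1.trans ht.1.le, ht.2.trans hx.2⟩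
    have htu : t ∈ Set.uIcc a b := by rwa [Set.uIcc_of_le hab]
    have d1 : HasDerivAt R (f t).re t := (h1 htu a (by simp)).const_add _
    have d2 : HasDerivAt I (f t).im t := (h2 htu a (by simp)).const_add _
    have d := (d1.fun_mul d1).fun_add (d2.fun_mul d2)
    rw [d.deriv, hRe t htI, hIm t htI, ← norm_mul]
    have e : (f t).re * (φ t).re + (φ t).re * (f t).re + ((f t).im * (φ t).im + (φ t).im * (f t).im)
        = 2 * ((starRingEnd ℂ (φ t)) * f t).re := by
      simp [Complex.mul_re]; ring
    rw [e, norm_mul, Real.norm_eq_abs, abs_two]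
    have := Complex.abs_re_le_norm ((starRingEnd ℂ (φ t)) * f t)
    rw [norm_mul, RCLike.norm_conj, ← norm_mul] at this
    rw [Real.norm_eq_abs]
    linarith
  have hg2 := hg.const_mul 2
  calc |∫ t in y..x, deriv (fun x => R x * R x + I x * I x) t|
      ≤ ∫ t in y..x, 2 * (‖φ t‖ * ‖f t‖) :=
        intervalIntegral.norm_integral_le_of_norm_le hyx hb (hg2.mono_set hsub)
    _ ≤ ∫ t in a..b, 2 * (‖φ t‖ * ‖f t‖) :=
        intervalIntegral.integral_mono_interval hy.1 hyx hx.2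
          (Filter.Eventually.of_forall fun t => by positivity) hg2
    _ = _ := by simp

/-- Weighted Cauchy–Schwarz. -/
lemma aux_cs_s5 (a b : ℝ) (p : ℝ → ℝ) (hpm : Measurable p)
    (hp_pos : ∀ᵐ x ∂(volume.restrict (Set.Ioc a b)), 0 < p x)
    (f g : ℝ → ℝ) (hf0 : ∀ x, 0 ≤ f x) (hg0 : ∀ x, 0 ≤ g x)
    (hfm : AEStronglyMeasurable f (volume.restrict (Set.Ioc a b)))
    (hgm : AEStronglyMeasurable g (volume.restrict (Set.Ioc a b)))
    (hf2 : IntegrableOn (fun t => f t ^ 2 / p t) (Set.Ioc a b))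
    (hg2 : IntegrableOn (fun t => g t ^ 2 / p t) (Set.Ioc a b)) :
    ∫ t in Set.Ioc a b, f t * (g t / p t) ≤
      √(∫ t in Set.Ioc a b, f t ^ 2 / p t) * √(∫ t in Set.Ioc a b, g t ^ 2 / p t) := by
  have hs : AEStronglyMeasurable (fun t => (√(p t))⁻¹) (volume.restrict (Set.Ioc a b)) :=
    (hpm.sqrt.inv).aestronglyMeasurable
  have hsq : ∀ h : ℝ → ℝ, (fun t => (h t * (√(p t))⁻¹) ^ 2)
      =ᵐ[volume.restrict (Set.Ioc a b)] fun t => h t ^ 2 / p t := by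
    intro h
    filter_upwards [hp_pos] with t ht
    rw [mul_pow, inv_pow, Real.sq_sqrt ht.le]; rfl
  have m : ∀ h : ℝ → ℝ, AEStronglyMeasurable h (volume.restrict (Set.Ioc a b)) →
      IntegrableOn (fun t => h t ^ 2 / p t) (Set.Ioc a b) →
      MemLp (fun t => h t * (√(p t))⁻¹) (ENNReal.ofReal 2) (volume.restrict (Set.Ioc a b)) := by
    intro h hm hi
    rw [show ENNReal.ofReal 2 = 2 by simp]
    refine (memLp_two_iff_integrable_sq (hm.mul hs)).2 ?_
    exact (integrable_congr (hsq h)).2 hi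
  have H := integral_mul_le_Lp_mul_Lq_of_nonneg (μ := volume.restrict (Set.Ioc a b))
    Real.HolderConjugate.two_two
    (Filter.Eventually.of_forall fun t => mul_nonneg (hf0 t) (by positivity))
    (Filter.Eventually.of_forall fun t => mul_nonneg (hg0 t) (by positivity))
    (m f hfm hf2) (m g hgm hg2)
  simp only [Real.rpow_two, ← Real.sqrt_eq_rpow] at H
  rw [integral_congr_ae (hsq f), integral_congr_ae (hsq g)] at H
  refine le_trans (le_of_eq ?_) H
  apply integral_congr_ae
  filter_upwards [hp_pos] with t ht
  have := Real.mul_self_sqrt ht.le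
  have h0 : √(p t) ≠ 0 := (Real.sqrt_pos.2 ht).ne'
  calc f t * (g t / p t) = f t * (g t / (√(p t) * √(p t))) := by rw [this]
    _ = _ := by field_simp

/-- Estimate (5.9) of the paper: if ∫ₐᵇ w|φ|² = 0 and ∫ₐᵇ w ≠ 0 then
‖φ‖_∞² ≤ δ·‖φ'‖_{p,2}·‖φ‖_{1/p,2} with δ = 2 + 2‖w‖_{L¹}/|∫ₐᵇ w|,
where u = pφ' is the quasi-derivative of φ. -/
theorem sup_norm_squared_estimate_delta
    (a b : ℝ) (hab : a < b) (p w : ℝ → ℝ)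
    (hpm : Measurable p) (hwm : Measurable w)
    (hp_pos : ∀ᵐ x ∂(volume.restrict (Set.Ioc a b)), 0 < p x)
    (hp_int : IntegrableOn (fun x => 1 / p x) (Set.Ioc a b))
    (hw_int : IntegrableOn w (Set.Ioc a b))
    (φ u : ℝ → ℂ)
    (hφc : ContinuousOn φ (Set.Icc a b)) (huc : ContinuousOn u (Set.Icc a b))
    (hφ : ∀ x ∈ Set.Icc a b, φ x = φ a + ∫ t in a..x, u t / (p t : ℂ))
    (hu2 : IntegrableOn (fun t => ‖u t‖ ^ 2 / p t) (Set.Ioc a b))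
    (hφ2 : IntegrableOn (fun t => ‖φ t‖ ^ 2 / p t) (Set.Ioc a b))
    (hwφ : ∫ t in a..b, w t * ‖φ t‖ ^ 2 = 0)
    (hw0 : (∫ t in a..b, w t) ≠ 0)
    (δ : ℝ) (hδ : δ = 2 + 2 * (∫ t in a..b, |w t|) / |∫ t in a..b, w t|) :
    (sSup ((fun x => ‖φ x‖) '' Set.Icc a b)) ^ 2
      ≤ δ * Real.sqrt (∫ t in a..b, ‖u t‖ ^ 2 / p t)
          * Real.sqrt (∫ t in a..b, ‖φ t‖ ^ 2 / p t) := by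
  have hle := hab.le
  have hpI : IntervalIntegrable (fun x => 1 / p x) volume a b :=
    (intervalIntegrable_iff_integrableOn_Ioc_of_le hle).2 hp_int
  have hwI : IntervalIntegrable w volume a b :=
    (intervalIntegrable_iff_integrableOn_Ioc_of_le hle).2 hw_int
  have hφc' : ContinuousOn φ (Set.uIcc a b) := by rwa [Set.uIcc_of_le hle]
  have huc' : ContinuousOn u (Set.uIcc a b) := by rwa [Set.uIcc_of_le hle]
  have hpC : IntervalIntegrable (fun x => ((1 / p x : ℝ) : ℂ)) volume a b :=
    ⟨hpI.1.ofReal, hpI.2.ofReal⟩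
  have hf : IntervalIntegrable (fun t => u t / (p t : ℂ)) volume a b := by
    refine (hpC.continuousOn_mul huc').congr ?_
    intro t _
    simp [div_eq_mul_inv]
  have hg : IntervalIntegrable (fun t => ‖φ t‖ * ‖u t / (p t : ℂ)‖) volume a b :=
    hf.norm.continuousOn_mul hφc'.norm
  set A := Real.sqrt (∫ t in a..b, ‖u t‖ ^ 2 / p t) with hA
  set B := Real.sqrt (∫ t in a..b, ‖φ t‖ ^ 2 / p t) with hB
  have hA0 : 0 ≤ A := Real.sqrt_nonneg _
  have hB0 : 0 ≤ B := Real.sqrt_nonneg _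
  have hM : ∫ t in a..b, ‖φ t‖ * ‖u t / (p t : ℂ)‖ ≤ A * B := by
    have hcs := aux_cs_s5 a b p hpm hp_pos (fun t => ‖φ t‖) (fun t => ‖u t‖)
      (fun t => norm_nonneg _) (fun t => norm_nonneg _)
      ((hφc.mono Set.Ioc_subset_Icc_self).norm.aestronglyMeasurable measurableSet_Ioc)
      ((huc.mono Set.Ioc_subset_Icc_self).norm.aestronglyMeasurable measurableSet_Ioc) hφ2 hu2
    rw [mul_comm, hA, hB]
    simp only [intervalIntegral.integral_of_le hle]
    refine le_trans (le_of_eq ?_) hcs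
    apply integral_congr_ae
    filter_upwards [hp_pos] with t ht
    simp [abs_of_pos ht]
  have hincr : ∀ x ∈ Set.Icc a b, ∀ y ∈ Set.Icc a b,
      |‖φ x‖ ^ 2 - ‖φ y‖ ^ 2| ≤ 2 * (A * B) := by
    intro x hx y hy
    rcases le_total y x with h | h
    · have := aux_normSq_incr a b hle _ φ hf hφ hg x y hx hy h
      linarith
    · have := aux_normSq_incr a b hle _ φ hf hφ hg y x hy hx h
      rw [abs_sub_comm]
      linarith
  have hW : 0 < |∫ t in a..b, w t| := abs_pos.2 hw0
  have hwφI : IntervalIntegrable (fun t => w t * ‖φ t‖ ^ 2) volume a b :=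
    hwI.mul_continuousOn (hφc'.norm.pow 2)
  have hpt : ∀ x ∈ Set.Icc a b, ‖φ x‖ ^ 2 ≤ δ * A * B := by
    intro x hx
    have e : ‖φ x‖ ^ 2 * (∫ t in a..b, w t) = ∫ t in a..b, w t * (‖φ x‖ ^ 2 - ‖φ t‖ ^ 2) := by
      simp only [mul_sub]
      rw [intervalIntegral.integral_sub (hwI.mul_const _) hwφI, hwφ,
        intervalIntegral.integral_mul_const]
      ring
    have h1 : ‖φ x‖ ^ 2 * |∫ t in a..b, w t| ≤ (∫ t in a..b, |w t|) * (2 * (A * B)) := by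
      rw [← abs_of_nonneg (sq_nonneg ‖φ x‖), ← abs_mul, e, ← intervalIntegral.integral_mul_const,
        ← Real.norm_eq_abs]
      refine intervalIntegral.norm_integral_le_of_norm_le hle ?_ (hwI.abs.mul_const _)
      refine Filter.Eventually.of_forall fun t ht => ?_
      rw [Real.norm_eq_abs, abs_mul]
      exact mul_le_mul_of_nonneg_left (hincr x hx t ⟨ht.1.le, ht.2⟩) (abs_nonneg _)
    have h2 : ‖φ x‖ ^ 2 ≤ (∫ t in a..b, |w t|) * (2 * (A * B)) / |∫ t in a..b, w t| :=
      (le_div_iff₀ hW).2 h1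
    have h3 : δ * A * B = 2 * (A * B)
        + (∫ t in a..b, |w t|) * (2 * (A * B)) / |∫ t in a..b, w t| := by
      rw [hδ]; ring
    have : 0 ≤ A * B := mul_nonneg hA0 hB0
    linarith
  have hne : (Set.Icc a b).Nonempty := Set.nonempty_Icc.2 hle
  obtain ⟨x, hx, hxs⟩ := isCompact_Icc.exists_sSup_image_eq hne hφc.norm
  rw [hxs]
  exact hpt x hx
end

section
/- Let p, g, w be real-valued measurable functions on (a,b) with p > 0 a.e., 1/p ∈ L¹(a,b), w ∈ L¹(a,b), and g(x)w(x) > 0 for a.e. x ∈ (a,b), with g bounded. Let γ > 0 and let φ : [a,b] → ℂ be measurable with ∫ₐᵇ |φ|²/p = 1 and sup|φ| ≤ γ. If ε > 0 satisfies μ_{1/p}({x ∈ [a,b] : p(x)g(x)w(x) < ε}) ≤ 1/(2γ²), where μ_{1/p} is the measure with density 1/p with respect to Lebesgue measure, then ∫ₐᵇ g(x)w(x)|φ(x)|² dx ≥ ε/2. -/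
open MeasureTheory Real Complex

/-- The key estimate (3.8) in the proof of Theorem 3.2:
if ∫ₐᵇ |φ|²/p = 1, sup|φ| ≤ γ, gw > 0 a.e., and
μ_{1/p}({pgw < ε}) ≤ 1/(2γ²), then ∫ₐᵇ gw|φ|² ≥ ε/2. -/
theorem key_lower_estimate
    (a b : ℝ) (hab : a < b) (p g w : ℝ → ℝ)
    (hpm : Measurable p) (hgm : Measurable g) (hwm : Measurable w)
    (hp_pos : ∀ᵐ x ∂(volume.restrict (Set.Ioc a b)), 0 < p x)
    (hp_int : IntegrableOn (fun x => 1 / p x) (Set.Ioc a b))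
    (hw_int : IntegrableOn w (Set.Ioc a b))
    (hgw : ∀ᵐ x ∂(volume.restrict (Set.Ioc a b)), 0 < g x * w x)
    (hg_bdd : ∃ M : ℝ, ∀ x ∈ Set.Icc a b, |g x| ≤ M)
    (γ : ℝ) (hγ : 0 < γ)
    (φ : ℝ → ℂ) (hφm : Measurable φ)
    (hφ_norm : ∫ t in a..b, ‖φ t‖ ^ 2 / p t = 1)
    (hφ_sup : ∀ x ∈ Set.Icc a b, ‖φ x‖ ≤ γ)
    (ε : ℝ) (hε : 0 < ε)
    (hεcond : (volume.withDensity fun x => ENNReal.ofReal (1 / p x))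
        {x | x ∈ Set.Icc a b ∧ p x * g x * w x < ε} ≤ ENNReal.ofReal (1 / (2 * γ ^ 2))) :
    ε / 2 ≤ ∫ t in a..b, g t * w t * ‖φ t‖ ^ 2 := by
  set B : Set ℝ := {x | x ∈ Set.Icc a b ∧ p x * g x * w x < ε} with hB
  have hBm : MeasurableSet B :=
    measurableSet_Icc.inter (measurableSet_lt ((hpm.mul hgm).mul hwm) measurable_const)
  obtain ⟨M, hM⟩ := hg_bdd
  rw [intervalIntegral.integral_of_le hab.le] at hφ_norm ⊢
  have hmem : ∀ᵐ x ∂(volume.restrict (Set.Ioc a b)), x ∈ Set.Ioc a b :=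
    ae_restrict_mem measurableSet_Ioc
  have hI1 : IntegrableOn (fun t => ‖φ t‖ ^ 2 / p t) (Set.Ioc a b) := by
    by_contra h
    rw [integral_undef h] at hφ_norm
    exact zero_ne_one hφ_norm
  have hI2 : IntegrableOn (B.indicator (fun x => 1 / p x)) (Set.Ioc a b) :=
    Integrable.indicator hp_int hBm
  have hI3 : IntegrableOn (fun t => g t * w t * ‖φ t‖ ^ 2) (Set.Ioc a b) := by
    have h1 : IntegrableOn (fun t => (g t * ‖φ t‖ ^ 2) * w t) (Set.Ioc a b) := by
      refine Integrable.bdd_mul (c := M * γ ^ 2) hw_int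
        (hgm.mul (hφm.norm.pow_const 2)).aestronglyMeasurable ?_
      filter_upwards [hmem] with x hx
      have hx' := Set.Ioc_subset_Icc_self hx
      rw [norm_mul, norm_pow, norm_norm, Real.norm_eq_abs]
      have := hM x hx'
      have := hφ_sup x hx'
      have := (abs_nonneg (g x)).trans (hM x hx')
      gcongr
    refine h1.congr (Filter.Eventually.of_forall fun x => ?_)
    simp only
    ring
  have hJ : ∫ x in Set.Ioc a b, B.indicator (fun x => 1 / p x) x ≤ 1 / (2 * γ ^ 2) := by
    rw [integral_eq_lintegral_of_nonneg_ae _ hI2.aestronglyMeasurable]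
    · refine ENNReal.toReal_le_of_le_ofReal (by positivity) (le_trans ?_ hεcond)
      rw [withDensity_apply _ hBm, ← lintegral_indicator hBm]
      refine (setLIntegral_le_lintegral _ _).trans (lintegral_mono fun x => ?_)
      by_cases hx : x ∈ B <;> simp [hx]
    · filter_upwards [hp_pos] with x hx
      by_cases hxB : x ∈ B
      · simp only [Set.indicator_of_mem hxB, Pi.zero_apply]
        positivity
      · simp [hxB]
  have key : ∫ x in Set.Ioc a b, (ε * (‖φ x‖ ^ 2 / p x)
      - ε * γ ^ 2 * B.indicator (fun x => 1 / p x) x)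
      ≤ ∫ t in Set.Ioc a b, g t * w t * ‖φ t‖ ^ 2 := by
    refine integral_mono_ae ((hI1.const_mul ε).sub (hI2.const_mul _)) hI3 ?_
    filter_upwards [hmem, hp_pos, hgw] with x hx hpx hgwx
    have hx' := Set.Ioc_subset_Icc_self hx
    have hs := hφ_sup x hx'
    by_cases hxB : x ∈ B
    · simp only [Set.indicator_of_mem hxB]
      have h1 : ‖φ x‖ ^ 2 / p x ≤ γ ^ 2 / p x := by gcongr
      have h2 : 0 ≤ g x * w x * ‖φ x‖ ^ 2 := by positivity
      have h3 := mul_le_mul_of_nonneg_left h1 hε.le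
      have h4 : ε * γ ^ 2 * (1 / p x) = ε * (γ ^ 2 / p x) := by ring
      linarith
    · simp only [Set.indicator_of_notMem hxB]
      have h1 : ε ≤ p x * g x * w x := by
        by_contra h
        exact hxB ⟨hx', not_le.mp h⟩
      have h2 : ε / p x ≤ g x * w x := by
        rw [div_le_iff₀ hpx]; linarith
      have h3 := mul_le_mul_of_nonneg_right h2 (sq_nonneg ‖φ x‖)
      have h4 : ε * (‖φ x‖ ^ 2 / p x) = ε / p x * ‖φ x‖ ^ 2 := by ring
      linarith
  rw [integral_sub (hI1.const_mul ε) (hI2.const_mul _), integral_const_mul, integral_const_mul,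
    hφ_norm] at key
  have h5 := mul_le_mul_of_nonneg_left hJ (by positivity : 0 ≤ ε * γ ^ 2)
  have h6 : ε * γ ^ 2 * (1 / (2 * γ ^ 2)) = ε / 2 := by field_simp
  linarith
end

section
/- Let λ ∈ ℂ with Im λ ≠ 0 and let (φ, u) be a solution of −(pφ')' + qφ = λwφ on [a,b] satisfying separated self-adjoint boundary conditions u(a) = l·φ(a), u(b) = r·φ(b) with l, r ∈ ℝ. Then ‖φ'‖_{p,2} ≤ β·‖φ‖_{1/p,2} and ‖φ‖_∞ ≤ γ·‖φ‖_{1/p,2}, where the constants α, β, γ are built from c := |l| + |r|. -/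
open MeasureTheory Real Complex

lemma ii_ofReal {f : ℝ → ℝ} {a b : ℝ} (h : IntervalIntegrable f volume a b) :
    IntervalIntegrable (fun x => (f x : ℂ)) volume a b := ⟨h.1.ofReal, h.2.ofReal⟩

lemma ac_cint {f : ℝ → ℂ} {a b : ℝ} (h : IntervalIntegrable f volume a b) :
    AbsolutelyContinuousOnInterval (fun x ↦ ∫ v in a..x, f v) a b := by
  have hn := h.norm.absolutelyContinuousOnInterval_intervalIntegral (c := a) (by simp)
  unfold AbsolutelyContinuousOnInterval at hn ⊢
  refine squeeze_zero' (Filter.Eventually.of_forall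
    fun _ ↦ Finset.sum_nonneg (fun i hi ↦ dist_nonneg)) ?_ hn
  rw [Filter.eventually_inf_principal]
  filter_upwards with (n, I) hnI
  refine Finset.sum_le_sum fun i hi ↦ ?_
  have h1 := (hnI.left i hi).left
  have h2 := (hnI.left i hi).right
  have i1 : IntervalIntegrable f volume a (I i).1 :=
    h.mono_set (Set.uIcc_subset_uIcc (by simp) h1)
  have i2 : IntervalIntegrable f volume a (I i).2 :=
    h.mono_set (Set.uIcc_subset_uIcc (by simp) h2)
  rw [dist_eq_norm, Real.dist_eq, intervalIntegral.integral_interval_sub_left i1 i2,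
    intervalIntegral.integral_interval_sub_left i1.norm i2.norm]
  exact intervalIntegral.norm_integral_le_abs_integral_norm

lemma ac_congr {f g : ℝ → ℂ} {a b : ℝ} (h : AbsolutelyContinuousOnInterval f a b) (c : ℂ)
    (hg : ∀ x, g x = c + f x) : AbsolutelyContinuousOnInterval g a b := by
  unfold AbsolutelyContinuousOnInterval at h ⊢
  simpa [hg] using h

lemma prod_aux {f g F G : ℝ → ℂ} {a b : ℝ} (hab : a ≤ b)
    (hf : IntervalIntegrable f volume a b) (hg : IntervalIntegrable g volume a b)
    (hF : ∀ x ∈ Set.Icc a b, F x = F a + ∫ t in a..x, f t)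
    (hG : ∀ x ∈ Set.Icc a b, G x = G a + ∫ t in a..x, g t)
    (hFc : ContinuousOn F (Set.Icc a b)) (hGc : ContinuousOn G (Set.Icc a b))
    (x : ℝ) (hx : x ∈ Set.Icc a b) :
    F x * G x = F a * G a + ∫ t in a..x, (f t * G t + F t * g t) := by
  have hk : IntervalIntegrable (fun t ↦ f t * G t + F t * g t) volume a b := by
    rw [← Set.uIcc_of_le hab] at hFc hGc
    exact (hf.mul_continuousOn hGc).add (hg.continuousOn_mul hFc)
  have aF := ac_congr (ac_cint hf) (F a) (g := fun x ↦ F a + ∫ t in a..x, f t) (fun _ ↦ rfl)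
  have aG := ac_congr (ac_cint hg) (G a) (g := fun x ↦ G a + ∫ t in a..x, g t) (fun _ ↦ rfl)
  have aH := (aF.smul aG).sub (ac_cint hk)
  obtain ⟨C, hC⟩ := aH.const_of_ae_hasDerivAt_zero (by
    filter_upwards [hf.ae_hasDerivAt_integral, hg.ae_hasDerivAt_integral,
      hk.ae_hasDerivAt_integral] with x h1 h2 h3 hx
    have d := (((h1 hx a (by simp)).const_add (F a)).mul ((h2 hx a (by simp)).const_add (G a))).sub
      (h3 hx a (by simp))
    rw [Set.uIcc_of_le hab] at hx
    rw [← hF x hx, ← hG x hx] at d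
    simp only [sub_self] at d
    exact d)
  rw [Set.uIcc_of_le hab] at hC
  have e1 := hC a (by simp [hab])
  have e2 := hC x hx
  simp only [Pi.sub_apply, Pi.mul_apply, smul_eq_mul, ← hF x hx, ← hG x hx,
    intervalIntegral.integral_same, add_zero, sub_zero] at e1 e2
  rw [e1, ← e2]; ring

/-- Cauchy-Schwarz with weight. -/
lemma cs_aux {A B C : ℝ} (h : ∀ t : ℝ, 0 ≤ A * (t * t) + (-2 * B) * t + C)
    (hA : 0 ≤ A) : B ≤ √A * √C := by
  have := discrim_le_zero h
  rw [← Real.sqrt_mul hA]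
  apply Real.le_sqrt_of_sq_le
  unfold discrim at this
  nlinarith

lemma final_aux {α P N D M β γ : ℝ} (hα0 : 0 ≤ α) (hP : 0 < P) (hN : 0 ≤ N) (hD : 0 ≤ D)
    (hM : 0 ≤ M) (h1 : D ^ 2 ≤ α * M ^ 2) (h2 : M ^ 2 ≤ N ^ 2 / P + 2 * (N * D))
    (hβ : β = √(α * (1 / P + α)) + α) (hγ : γ = √(2 * β + 1 / P)) :
    D ≤ β * N ∧ M ≤ γ * N := by
  have hs : 0 ≤ α * (1 / P + α) := by positivity
  have hb : D ≤ β * N := by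
    have h3 : (D - α * N) ^ 2 ≤ (√(α * (1 / P + α)) * N) ^ 2 := by
      rw [mul_pow, Real.sq_sqrt hs]
      have := mul_le_mul_of_nonneg_left h2 hα0
      have e : N ^ 2 / P = 1 / P * N ^ 2 := by ring
      rw [e] at this
      nlinarith
    have := abs_le_of_sq_le_sq h3 (by positivity)
    rw [hβ]; nlinarith [le_abs_self (D - α * N)]
  refine ⟨hb, ?_⟩
  have hβ0 : 0 ≤ β := by rw [hβ]; positivity
  refine le_of_sq_le_sq ?_ (by rw [hγ]; positivity) 
  rw [hγ, mul_pow, Real.sq_sqrt (by positivity)]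
  have e : N ^ 2 / P = 1 / P * N ^ 2 := by ring
  rw [e] at h2
  nlinarith [mul_le_mul_of_nonneg_left hb hN]

/-- Lemma 3.1 of the paper for separated self-adjoint boundary conditions:
for a non-real eigenvalue λ and a corresponding solution (φ, u),
‖φ'‖_{p,2} ≤ β·‖φ‖_{1/p,2} and ‖φ‖_∞ ≤ γ·‖φ‖_{1/p,2}, where the
constants are built from c = |l| + |r|. -/
theorem eigenfunction_norm_estimates_separated
    (a b : ℝ) (hab : a < b) (p q w : ℝ → ℝ)
    (hpm : Measurable p) (hqm : Measurable q) (hwm : Measurable w)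
    (hp_pos : ∀ᵐ x ∂(volume.restrict (Set.Ioc a b)), 0 < p x)
    (hp_int : IntegrableOn (fun x => 1 / p x) (Set.Ioc a b))
    (hq_int : IntegrableOn q (Set.Ioc a b))
    (hw_int : IntegrableOn w (Set.Ioc a b))
    (hw_ne : ∀ᵐ x ∂(volume.restrict (Set.Ioc a b)), w x ≠ 0)
    (lam : ℂ) (hlam : lam.im ≠ 0) (φ u : ℝ → ℂ)
    (hφc : ContinuousOn φ (Set.Icc a b)) (huc : ContinuousOn u (Set.Icc a b))
    (hφ : ∀ x ∈ Set.Icc a b, φ x = φ a + ∫ t in a..x, u t / (p t : ℂ))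
    (hu : ∀ x ∈ Set.Icc a b, u x = u a + ∫ t in a..x, ((q t : ℂ) - lam * (w t : ℂ)) * φ t)
    (l r : ℝ) (hbca : u a = (l : ℂ) * φ a) (hbcb : u b = (r : ℂ) * φ b)
    (c α β γ : ℝ)
    (hc : c = |l| + |r|)
    (hα : α = c + ∫ t in a..b, |min (q t) 0|)
    (hβ : β = Real.sqrt (α * (1 / (∫ t in a..b, 1 / p t) + α)) + α)
    (hγ : γ = Real.sqrt (2 * β + 1 / (∫ t in a..b, 1 / p t))) :
    Real.sqrt (∫ t in a..b, ‖u t‖ ^ 2 / p t)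
        ≤ β * Real.sqrt (∫ t in a..b, ‖φ t‖ ^ 2 / p t)
      ∧ sSup ((fun x => ‖φ x‖) '' Set.Icc a b)
        ≤ γ * Real.sqrt (∫ t in a..b, ‖φ t‖ ^ 2 / p t) := by
  have hab' := hab.le
  have huI : Set.uIcc a b = Set.Icc a b := Set.uIcc_of_le hab'
  have hφc' : ContinuousOn φ (Set.uIcc a b) := by rwa [huI]
  have huc' : ContinuousOn u (Set.uIcc a b) := by rwa [huI]
  have ip : IntervalIntegrable (fun x => 1 / p x) volume a b :=
    (intervalIntegrable_iff_integrableOn_Ioc_of_le hab').2 hp_int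
  have iq : IntervalIntegrable q volume a b :=
    (intervalIntegrable_iff_integrableOn_Ioc_of_le hab').2 hq_int
  have iw : IntervalIntegrable w volume a b :=
    (intervalIntegrable_iff_integrableOn_Ioc_of_le hab').2 hw_int
  have ipC : IntervalIntegrable (fun x => ((1 / p x : ℝ) : ℂ)) volume a b := ii_ofReal ip
  have iqC : IntervalIntegrable (fun x => (q x : ℂ)) volume a b := ii_ofReal iq
  have iwC : IntervalIntegrable (fun x => (w x : ℂ)) volume a b := ii_ofReal iw
  have nφ : ContinuousOn (fun t => ‖φ t‖) (Set.uIcc a b) := hφc'.norm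
  have nu : ContinuousOn (fun t => ‖u t‖) (Set.uIcc a b) := huc'.norm
  have cφ : ContinuousOn (fun t => (starRingEnd ℂ) (φ t)) (Set.uIcc a b) :=
    Complex.continuous_conj.comp_continuousOn hφc'
  have cu : ContinuousOn (fun t => (starRingEnd ℂ) (u t)) (Set.uIcc a b) :=
    Complex.continuous_conj.comp_continuousOn huc'
  have iA : IntervalIntegrable (fun t => ‖u t‖ ^ 2 / p t) volume a b := by
    have := ip.continuousOn_mul (nu.pow 2)
    refine this.congr (fun t _ => ?_)
    simp [div_eq_mul_inv]
  have iC : IntervalIntegrable (fun t => ‖φ t‖ ^ 2 / p t) volume a b := by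
    have := ip.continuousOn_mul (nφ.pow 2)
    refine this.congr (fun t _ => ?_)
    simp [div_eq_mul_inv]
  have iB : IntervalIntegrable (fun t => ‖u t‖ * ‖φ t‖ / p t) volume a b := by
    have := ip.continuousOn_mul (nu.mul nφ)
    refine this.congr (fun t _ => ?_)
    simp [div_eq_mul_inv]
  have iQ : IntervalIntegrable (fun t => q t * ‖φ t‖ ^ 2) volume a b :=
    iq.mul_continuousOn (nφ.pow 2)
  have iW : IntervalIntegrable (fun t => w t * ‖φ t‖ ^ 2) volume a b :=
    iw.mul_continuousOn (nφ.pow 2)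
  have iqm : IntervalIntegrable (fun t => |min (q t) 0|) volume a b := by
    refine iq.mono_fun ((hqm.min measurable_const).abs.aestronglyMeasurable)
      (Filter.Eventually.of_forall fun t => ?_)
    simp only [Real.norm_eq_abs, abs_abs]
    rcases le_total (q t) 0 with h | h
    · simp [h]
    · simp [h]
  have if1 : IntervalIntegrable (fun t => u t / (p t : ℂ)) volume a b := by
    have := ipC.continuousOn_mul huc'
    refine this.congr (fun t _ => ?_)
    simp [div_eq_mul_inv]
  have if2 : IntervalIntegrable (fun t => (starRingEnd ℂ) (u t / (p t : ℂ))) volume a b := by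
    have := ipC.continuousOn_mul cu
    refine this.congr (fun t _ => ?_)
    simp [div_eq_mul_inv]
  have ig : IntervalIntegrable (fun t => ((q t : ℂ) - lam * (w t : ℂ)) * φ t) volume a b :=
    (iqC.sub (iwC.const_mul lam)).mul_continuousOn hφc'
  have hφbar : ∀ x ∈ Set.Icc a b, (starRingEnd ℂ) (φ x) = (starRingEnd ℂ) (φ a)
      + ∫ t in a..x, (starRingEnd ℂ) (u t / (p t : ℂ)) := by
    intro x hx
    rw [intervalIntegral.intervalIntegral_conj, ← map_add, ← hφ x hx]
  have hp' : ∀ᵐ x, x ∈ Set.Ioc a b → 0 < p x := (ae_restrict_iff' measurableSet_Ioc).1 hp_pos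
  have hP : 0 < ∫ t in a..b, 1 / p t := by
    rw [intervalIntegral.integral_pos_iff_support_of_nonneg_ae' _ ip]
    · refine ⟨hab, ?_⟩
      have : (Function.support (fun x => 1 / p x) ∩ Set.Ioc a b : Set ℝ) =ᵐ[volume]
          (Set.Ioc a b : Set ℝ) := by
        filter_upwards [hp'] with x hx
        refine propext ⟨fun h => h.2, fun h => ⟨?_, h⟩⟩
        have := hx h
        simp [this.ne']
      rw [measure_congr this]
      simp [hab]
    · rw [Set.uIoc_of_le hab']
      filter_upwards [hp_pos] with x hx
      simp [hx.le]
  have mono : ∀ f g : ℝ → ℝ, IntervalIntegrable f volume a b → IntervalIntegrable g volume a b →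
      (∀ x ∈ Set.Icc a b, 0 < p x → f x ≤ g x) → ∫ t in a..b, f t ≤ ∫ t in a..b, g t := by
    intro f g hf hg h
    refine intervalIntegral.integral_mono_ae_restrict hab' hf hg ?_
    have h3 : ∀ᵐ x ∂(volume.restrict (Set.Icc a b)), 0 < p x := by
      rw [← restrict_Ioc_eq_restrict_Icc]; exact hp_pos
    filter_upwards [h3, ae_restrict_mem measurableSet_Icc] with x h1 h2
    exact h x h2 h1
  obtain ⟨x₀, hx₀, hmax⟩ := isCompact_Icc.exists_isMaxOn (Set.nonempty_Icc.2 hab') hφc.norm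
  obtain ⟨y₀, hy₀, hmin⟩ := isCompact_Icc.exists_isMinOn (Set.nonempty_Icc.2 hab') hφc.norm
  have hmax' : ∀ x ∈ Set.Icc a b, ‖φ x‖ ≤ ‖φ x₀‖ := fun x hx => hmax hx
  have hmin' : ∀ x ∈ Set.Icc a b, ‖φ y₀‖ ≤ ‖φ x‖ := fun x hx => hmin hx
  have hsup : sSup ((fun x => ‖φ x‖) '' Set.Icc a b) ≤ ‖φ x₀‖ := by
    apply csSup_le ((Set.nonempty_Icc.2 hab').image _)
    rintro _ ⟨x, hx, rfl⟩
    exact hmax' x hx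
  have A0 : 0 ≤ ∫ t in a..b, ‖u t‖ ^ 2 / p t := by
    have := mono (fun _ => 0) _ (by simp) iA (fun x _ h => by positivity)
    simpa using this
  have C0 : 0 ≤ ∫ t in a..b, ‖φ t‖ ^ 2 / p t := by
    have := mono (fun _ => 0) _ (by simp) iC (fun x _ h => by positivity)
    simpa using this
  have qm0 : 0 ≤ ∫ t in a..b, |min (q t) 0| :=
    intervalIntegral.integral_nonneg hab' (fun _ _ => abs_nonneg _)
  have hα0 : 0 ≤ α := by rw [hα, hc]; positivity
  have hen := prod_aux hab' if2 ig hφbar hu (by rwa [huI] at cφ) huc b (Set.right_mem_Icc.2 hab')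
  have hint : (∫ t in a..b, ((starRingEnd ℂ) (u t / (p t : ℂ)) * u t +
      (starRingEnd ℂ) (φ t) * (((q t : ℂ) - lam * (w t : ℂ)) * φ t))) =
      (((∫ t in a..b, ‖u t‖ ^ 2 / p t) + ∫ t in a..b, q t * ‖φ t‖ ^ 2 : ℝ) : ℂ)
        - lam * ((∫ t in a..b, w t * ‖φ t‖ ^ 2 : ℝ) : ℂ) := by
    rw [← intervalIntegral.integral_add iA iQ, ← intervalIntegral.integral_ofReal,
      ← intervalIntegral.integral_ofReal, ← intervalIntegral.integral_const_mul,
      ← intervalIntegral.integral_sub (ii_ofReal (iA.add iQ)) ((ii_ofReal iW).const_mul lam)]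
    congr 1
    ext t
    have e1 := Complex.conj_mul' (u t)
    have e2 := Complex.conj_mul' (φ t)
    simp only [map_div₀, Complex.conj_ofReal]
    push_cast
    rw [← e1, ← e2]
    ring
  rw [hint, hbca, hbcb] at hen
  set W := ∫ t in a..b, w t * ‖φ t‖ ^ 2 with hW
  set Q := ∫ t in a..b, q t * ‖φ t‖ ^ 2 with hQ
  set A := ∫ t in a..b, ‖u t‖ ^ 2 / p t with hA
  set C := ∫ t in a..b, ‖φ t‖ ^ 2 / p t with hC
  set P := ∫ t in a..b, 1 / p t with hPd
  have ea := Complex.conj_mul' (φ a)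
  have eb := Complex.conj_mul' (φ b)
  have hen2 : ((r * ‖φ b‖ ^ 2 : ℝ) : ℂ) = ((l * ‖φ a‖ ^ 2 + (A + Q) : ℝ) : ℂ) - lam * (W : ℂ) := by
    push_cast
    push_cast at hen
    rw [← ea, ← eb]
    linear_combination hen
  have him := congrArg Complex.im hen2
  have hre := congrArg Complex.re hen2
  simp only [Complex.sub_im, Complex.sub_re, Complex.ofReal_im, Complex.ofReal_re, Complex.mul_im,
    Complex.mul_re] at him hre
  have hW0 : W = 0 := by
    have : lam.im * W = 0 := by linarith
    exact (mul_eq_zero.1 this).resolve_left hlam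
  rw [hW0] at hre
  have hQb : -((∫ t in a..b, |min (q t) 0|) * ‖φ x₀‖ ^ 2) ≤ Q := by
    rw [← intervalIntegral.integral_mul_const, ← intervalIntegral.integral_neg]
    refine mono _ _ (iqm.mul_const _).neg iQ (fun x hx _ => ?_)
    have h1 := pow_le_pow_left₀ (norm_nonneg _) (hmax' x hx) 2
    have h2 : 0 ≤ ‖φ x‖ ^ 2 := by positivity
    rcases le_total (q x) 0 with h | h
    · simp only [min_eq_left h, abs_of_nonpos h]
      nlinarith
    · simp only [min_eq_right h, abs_zero]
      nlinarith
  have hAb : A ≤ α * ‖φ x₀‖ ^ 2 := by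
    have h1 := pow_le_pow_left₀ (norm_nonneg _) (hmax' a (Set.left_mem_Icc.2 hab')) 2
    have h2 := pow_le_pow_left₀ (norm_nonneg _) (hmax' b (Set.right_mem_Icc.2 hab')) 2
    have h3 : r * ‖φ b‖ ^ 2 ≤ |r| * ‖φ x₀‖ ^ 2 :=
      mul_le_mul (le_abs_self r) h2 (by positivity) (by positivity)
    have h4 : -l * ‖φ a‖ ^ 2 ≤ |l| * ‖φ x₀‖ ^ 2 :=
      mul_le_mul (neg_le_abs l) h1 (by positivity) (by positivity)
    rw [hα, hc]
    linarith
  have hB : (∫ t in a..b, ‖u t‖ * ‖φ t‖ / p t) ≤ √A * √C := by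
    refine cs_aux (fun s => ?_) A0
    have h0 := mono (fun _ => 0) (fun t => (s * s) * (‖u t‖ ^ 2 / p t)
        + ((-2 * s) * (‖u t‖ * ‖φ t‖ / p t) + ‖φ t‖ ^ 2 / p t)) (by simp)
      ((iA.const_mul _).add ((iB.const_mul _).add iC)) (fun x _ h => by
        have : (s * s) * (‖u x‖ ^ 2 / p x)
          + ((-2 * s) * (‖u x‖ * ‖φ x‖ / p x) + ‖φ x‖ ^ 2 / p x)
          = (s * ‖u x‖ - ‖φ x‖) ^ 2 / p x := by ring
        rw [this]; positivity)
    rw [intervalIntegral.integral_add (iA.const_mul _) ((iB.const_mul _).add iC),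
      intervalIntegral.integral_add (iB.const_mul _) iC, intervalIntegral.integral_const_mul,
      intervalIntegral.integral_const_mul, intervalIntegral.integral_zero] at h0
    linarith
  have hsq := prod_aux hab' if2 if1 hφbar hφ (by rwa [huI] at cφ) hφc
  have ik : IntervalIntegrable (fun t => (starRingEnd ℂ) (u t / (p t : ℂ)) * φ t +
      (starRingEnd ℂ) (φ t) * (u t / (p t : ℂ))) volume a b :=
    (if2.mul_continuousOn hφc').add (if1.continuousOn_mul cφ)
  have hosc : ‖φ x₀‖ ^ 2 - ‖φ y₀‖ ^ 2 ≤ 2 * ∫ t in a..b, ‖u t‖ * ‖φ t‖ / p t := by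
    have hx := hsq x₀ hx₀
    have hy := hsq y₀ hy₀
    rw [Complex.conj_mul'] at hx hy
    have ix := ik.mono_set (c := a) (d := x₀)
      (Set.uIcc_subset_uIcc (by simp) (by rwa [huI]))
    have iy := ik.mono_set (c := a) (d := y₀)
      (Set.uIcc_subset_uIcc (by simp) (by rwa [huI]))
    have hd := intervalIntegral.integral_interval_sub_left ix iy
    have hd2 : ((‖φ x₀‖ ^ 2 - ‖φ y₀‖ ^ 2 : ℝ) : ℂ) = ∫ t in y₀..x₀,
        ((starRingEnd ℂ) (u t / (p t : ℂ)) * φ t + (starRingEnd ℂ) (φ t) * (u t / (p t : ℂ))) := by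
      rw [← hd]; push_cast; rw [hx, hy]; ring
    have hsub : Set.uIoc y₀ x₀ ⊆ Set.Ioc a b :=
      Set.Ioc_subset_Ioc (le_min hy₀.1 hx₀.1) (max_le hy₀.2 hx₀.2)
    calc ‖φ x₀‖ ^ 2 - ‖φ y₀‖ ^ 2 ≤ ‖((‖φ x₀‖ ^ 2 - ‖φ y₀‖ ^ 2 : ℝ) : ℂ)‖ := by
          rw [Complex.norm_real]; exact le_abs_self _
      _ ≤ ∫ t in Set.uIoc y₀ x₀, ‖(starRingEnd ℂ) (u t / (p t : ℂ)) * φ t +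
            (starRingEnd ℂ) (φ t) * (u t / (p t : ℂ))‖ := by
          rw [hd2]; exact intervalIntegral.norm_integral_le_integral_norm_uIoc
      _ ≤ ∫ t in Set.Ioc a b, ‖(starRingEnd ℂ) (u t / (p t : ℂ)) * φ t +
            (starRingEnd ℂ) (φ t) * (u t / (p t : ℂ))‖ :=
          setIntegral_mono_set ik.1.norm (Filter.Eventually.of_forall fun _ => norm_nonneg _)
            hsub.eventuallyLE
      _ = ∫ t in a..b, ‖(starRingEnd ℂ) (u t / (p t : ℂ)) * φ t +
            (starRingEnd ℂ) (φ t) * (u t / (p t : ℂ))‖ :=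
          (intervalIntegral.integral_of_le hab').symm
      _ ≤ ∫ t in a..b, 2 * (‖u t‖ * ‖φ t‖ / p t) := by
          refine mono _ _ ik.norm (iB.const_mul 2) (fun x _ hpx => ?_)
          refine (norm_add_le _ _).trans (le_of_eq ?_)
          simp only [norm_mul, norm_div, RCLike.norm_conj, Complex.norm_real, Real.norm_eq_abs,
            abs_of_pos hpx]
          ring
      _ = _ := intervalIntegral.integral_const_mul _ _
  have hy : ‖φ y₀‖ ^ 2 * P ≤ C := by
    rw [hPd, ← intervalIntegral.integral_const_mul]
    refine mono _ _ (ip.const_mul _) iC (fun x hx hpx => ?_)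
    rw [mul_one_div]
    gcongr
    exact hmin' x hx
  have hfin := final_aux (M := ‖φ x₀‖) (N := √C) (D := √A) hα0 hP (Real.sqrt_nonneg _)
    (Real.sqrt_nonneg _) (norm_nonneg _) (by rwa [Real.sq_sqrt A0])
    (by
      rw [Real.sq_sqrt C0]
      have := (le_div_iff₀ hP).2 hy
      nlinarith) hβ hγ
  exact ⟨hfin.1, hsup.trans hfin.2⟩
end

section
/- Let λ ∈ ℂ with Im λ ≠ 0 and let (φ, u) be a solution of −(pφ')' + qφ = λwφ on [a,b] satisfying coupled self-adjoint boundary conditions (φ(b), u(b))ᵀ = e^{iθ} R (φ(a), u(a))ᵀ, where θ ∈ [0,2π) and R = (r_{ij}) is a real 2×2 matrix with det R = 1. Then ‖φ'‖_{p,2} ≤ β·‖φ‖_{1/p,2} and ‖φ‖_∞ ≤ γ·‖φ‖_{1/p,2}, where the constants α, β, γ are built from c := (|r₁₁| + |r₂₂| + 2)/|r₁₂| if r₁₂ ≠ 0 and c := |r₁₁ r₂₁| if r₁₂ = 0. -/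
open MeasureTheory Real Complex

lemma aux_ac {f : ℝ → ℂ} {a b : ℝ} (hf : IntervalIntegrable f volume a b) :
    AbsolutelyContinuousOnInterval (fun x => ∫ t in a..x, f t) a b := by
  have hN := hf.norm.absolutelyContinuousOnInterval_intervalIntegral (c := a) (by simp)
  rw [absolutelyContinuousOnInterval_iff] at hN ⊢
  intro ε hε
  obtain ⟨δ, hδ, h⟩ := hN ε hε
  refine ⟨δ, hδ, fun E hE hlt => lt_of_le_of_lt ?_ (h E hE hlt)⟩
  apply Finset.sum_le_sum
  intro i hi
  have hm := hE.1 i hi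
  have key : ∀ z ∈ Set.uIcc a b, IntervalIntegrable f volume a z := fun z hz =>
    hf.mono_set (Set.uIcc_subset_uIcc_left hz)
  have h1 := key _ hm.1
  have h2 := key _ hm.2
  rw [dist_eq_norm, dist_eq_norm, intervalIntegral.integral_interval_sub_left h1 h2,
    intervalIntegral.integral_interval_sub_left h1.norm h2.norm, Real.norm_eq_abs]
  exact intervalIntegral.norm_integral_le_abs_integral_norm

lemma aux_prod {f g F G : ℝ → ℂ} {a b : ℝ} (hab : a < b)
    (hf : IntervalIntegrable f volume a b) (hg : IntervalIntegrable g volume a b)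
    (hFc : ContinuousOn F (Set.Icc a b)) (hGc : ContinuousOn G (Set.Icc a b))
    (hF : ∀ x ∈ Set.Icc a b, F x = F a + ∫ t in a..x, f t)
    (hG : ∀ x ∈ Set.Icc a b, G x = G a + ∫ t in a..x, g t) :
    ∀ x ∈ Set.Icc a b, F x * G x = F a * G a + ∫ t in a..x, (f t * G t + F t * g t) := by
  have hu : Set.uIcc a b = Set.Icc a b := Set.uIcc_of_le hab.le
  have hh : IntervalIntegrable (fun t => f t * G t + F t * g t) volume a b :=
    (hf.mul_continuousOn (hu ▸ hGc)).add (hg.continuousOn_mul (hu ▸ hFc))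
  have hconst : ∀ c : ℂ, AbsolutelyContinuousOnInterval (fun _ : ℝ => c) a b := fun c =>
    ContDiffOn.absolutelyContinuousOnInterval contDiffOn_const
  have hF1 := (hconst (F a)).fun_add (aux_ac hf)
  have hG1 := (hconst (G a)).fun_add (aux_ac hg)
  have hK := (hF1.fun_smul hG1).fun_sub (aux_ac hh)
  obtain ⟨C, hC⟩ := hK.const_of_ae_hasDerivAt_zero (by
    filter_upwards [hf.ae_hasDerivAt_integral, hg.ae_hasDerivAt_integral,
      hh.ae_hasDerivAt_integral] with x h1 h2 h3 hx
    have d1 := (h1 hx a (by simp)).const_add (F a)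
    have d2 := (h2 hx a (by simp)).const_add (G a)
    have d3 := h3 hx a (by simp)
    have := (d1.mul d2).sub d3
    rw [hu] at hx
    rw [← hF x hx, ← hG x hx, sub_self] at this
    exact this)
  have h0 := hC a (by simp)
  simp only [intervalIntegral.integral_same, add_zero, sub_zero, smul_eq_mul] at h0
  intro x hx
  have h1 := hC x (hu ▸ hx)
  simp only [smul_eq_mul] at h1
  rw [← hF x hx, ← hG x hx, ← h0] at h1
  rw [← h1]; ring

lemma aux_conj {f F : ℝ → ℂ} {a b : ℝ}
    (hF : ∀ x ∈ Set.Icc a b, F x = F a + ∫ t in a..x, f t) :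
    ∀ x ∈ Set.Icc a b, (starRingEnd ℂ) (F x) = (starRingEnd ℂ) (F a) +
      ∫ t in a..x, (starRingEnd ℂ) (f t) := by
  intro x hx
  rw [hF x hx, map_add, intervalIntegral.integral_of_le hx.1, intervalIntegral.integral_of_le hx.1,
    integral_conj]

lemma aux_ofReal {f : ℝ → ℝ} {a b : ℝ} (hf : IntervalIntegrable f volume a b) :
    IntervalIntegrable (fun t => (f t : ℂ)) volume a b :=
  ⟨hf.1.ofReal, hf.2.ofReal⟩

lemma aux_min (x : ℝ) : |min x 0| ≤ |x| := by
  rcases le_total x 0 with h | h <;> simp [h]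

lemma aux_bdry (φa ua φb ub e : ℂ) (he : ‖e‖ = 1) (r11 r12 r21 r22 c K : ℝ)
    (hdet : r11 * r22 - r12 * r21 = 1)
    (h1 : φb = e * ((r11 : ℂ) * φa + (r12 : ℂ) * ua))
    (h2 : ub = e * ((r21 : ℂ) * φa + (r22 : ℂ) * ua))
    (hc : c = if r12 = 0 then |r11 * r21| else (|r11| + |r22| + 2) / |r12|)
    (ha : ‖φa‖ ^ 2 ≤ K) (hb : ‖φb‖ ^ 2 ≤ K) :
    (ub * (starRingEnd ℂ) φb - ua * (starRingEnd ℂ) φa).im = 0 ∧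
    (ub * (starRingEnd ℂ) φb - ua * (starRingEnd ℂ) φa).re ≤ c * K := by
  have hee : e * (starRingEnd ℂ) e = 1 := by
    rw [Complex.mul_conj, Complex.normSq_eq_norm_sq, he]; norm_num
  have hdetC : (r11 : ℂ) * r22 - r12 * r21 = 1 := by exact_mod_cast hdet
  have hX : ub * (starRingEnd ℂ) φb = ((r21 : ℂ) * φa + (r22 : ℂ) * ua) *
      ((r11 : ℂ) * (starRingEnd ℂ) φa + (r12 : ℂ) * (starRingEnd ℂ) ua) := by
    rw [h1, h2]
    simp only [map_mul, map_add, Complex.conj_ofReal]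
    linear_combination ((r21 : ℂ) * φa + (r22 : ℂ) * ua) *
      ((r11 : ℂ) * (starRingEnd ℂ) φa + (r12 : ℂ) * (starRingEnd ℂ) ua) * hee
  constructor
  · rw [hX]
    simp
    linear_combination (ua.im * φa.re - ua.re * φa.im) * hdet
  · split_ifs at hc with h0
    · subst h0
      have : (ub * (starRingEnd ℂ) φb - ua * (starRingEnd ℂ) φa).re = r11 * r21 * ‖φa‖ ^ 2 := by
        rw [hX, ← Complex.normSq_eq_norm_sq, Complex.normSq_apply]
        simp
        linear_combination (ua.re * φa.re + ua.im * φa.im) * hdet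
      rw [this, hc]
      calc r11 * r21 * ‖φa‖ ^ 2 ≤ |r11 * r21| * ‖φa‖ ^ 2 := by gcongr; exact le_abs_self _
        _ ≤ _ := by gcongr
    · have hr : (r12 : ℂ) ≠ 0 := by exact_mod_cast h0
      have e1 : (r12 : ℂ) * ua = (starRingEnd ℂ) e * φb - r11 * φa := by
        rw [h1]; linear_combination (-(r11 : ℂ) * φa - r12 * ua) * hee
      have e2 : (r12 : ℂ) * ub = r22 * φb - e * φa := by
        rw [h1, h2]; linear_combination (-e * φa) * hdetC
      have n1 : |r12| * ‖ua‖ ≤ ‖φb‖ + |r11| * ‖φa‖ := by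
        have := congrArg norm e1
        rw [norm_mul, Complex.norm_real, Real.norm_eq_abs] at this
        rw [this]
        refine (norm_sub_le _ _).trans (le_of_eq ?_)
        simp [he]
      have n2 : |r12| * ‖ub‖ ≤ |r22| * ‖φb‖ + ‖φa‖ := by
        have := congrArg norm e2
        rw [norm_mul, Complex.norm_real, Real.norm_eq_abs] at this
        rw [this]
        refine (norm_sub_le _ _).trans (le_of_eq ?_)
        simp [he]
      have hp : 0 < |r12| := abs_pos.mpr h0
      have hre : (ub * (starRingEnd ℂ) φb - ua * (starRingEnd ℂ) φa).re
          ≤ ‖ub‖ * ‖φb‖ + ‖ua‖ * ‖φa‖ := by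
        refine (Complex.re_le_norm _).trans ((norm_sub_le _ _).trans (le_of_eq ?_))
        simp
      refine hre.trans ?_
      rw [hc, div_mul_eq_mul_div, le_div_iff₀ hp]
      have q1 := mul_le_mul_of_nonneg_right n1 (norm_nonneg φa)
      have q2 := mul_le_mul_of_nonneg_right n2 (norm_nonneg φb)
      have q3 := mul_le_mul_of_nonneg_left ha (abs_nonneg r11)
      have q4 := mul_le_mul_of_nonneg_left hb (abs_nonneg r22)
      nlinarith [sq_nonneg (‖φa‖ - ‖φb‖)]

lemma aux_final (α P F U K : ℝ) (hα : 0 ≤ α) (hP : 0 < P) (hF : 0 ≤ F)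
    (hK : K = F ^ 2 / P + 2 * (F * U)) (h : U ^ 2 ≤ α * K) :
    U ≤ (√(α * (1 / P + α)) + α) * F := by
  have h1 : (U - α * F) ^ 2 ≤ (√(α * (1 / P + α)) * F) ^ 2 := by
    rw [mul_pow, Real.sq_sqrt (by positivity)]
    rw [hK] at h
    have : F ^ 2 / P = 1 / P * F ^ 2 := by ring
    rw [this] at h
    nlinarith
  have := abs_le_of_sq_le_sq h1 (by positivity)
  have := (abs_le.mp this).2
  linarith

/-- Lemma 3.1 of the paper for coupled self-adjoint boundary conditions:
for a non-real eigenvalue λ and a corresponding solution (φ, u),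
‖φ'‖_{p,2} ≤ β·‖φ‖_{1/p,2} and ‖φ‖_∞ ≤ γ·‖φ‖_{1/p,2}, where the constants
are built from c = (|r₁₁|+|r₂₂|+2)/|r₁₂| if r₁₂ ≠ 0 and c = |r₁₁r₂₁| if r₁₂ = 0. -/
theorem eigenfunction_norm_estimates_coupled
    (a b : ℝ) (hab : a < b) (p q w : ℝ → ℝ)
    (hpm : Measurable p) (hqm : Measurable q) (hwm : Measurable w)
    (hp_pos : ∀ᵐ x ∂(volume.restrict (Set.Ioc a b)), 0 < p x)
    (hp_int : IntegrableOn (fun x => 1 / p x) (Set.Ioc a b))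
    (hq_int : IntegrableOn q (Set.Ioc a b))
    (hw_int : IntegrableOn w (Set.Ioc a b))
    (hw_ne : ∀ᵐ x ∂(volume.restrict (Set.Ioc a b)), w x ≠ 0)
    (lam : ℂ) (hlam : lam.im ≠ 0) (φ u : ℝ → ℂ)
    (hφc : ContinuousOn φ (Set.Icc a b)) (huc : ContinuousOn u (Set.Icc a b))
    (hφ : ∀ x ∈ Set.Icc a b, φ x = φ a + ∫ t in a..x, u t / (p t : ℂ))
    (hu : ∀ x ∈ Set.Icc a b, u x = u a + ∫ t in a..x, ((q t : ℂ) - lam * (w t : ℂ)) * φ t)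
    (θ : ℝ) (hθ : θ ∈ Set.Ico 0 (2 * π))
    (r11 r12 r21 r22 : ℝ) (hdet : r11 * r22 - r12 * r21 = 1)
    (hbcφ : φ b = Complex.exp (θ * Complex.I) * ((r11 : ℂ) * φ a + (r12 : ℂ) * u a))
    (hbcu : u b = Complex.exp (θ * Complex.I) * ((r21 : ℂ) * φ a + (r22 : ℂ) * u a))
    (c α β γ : ℝ)
    (hc : c = if r12 = 0 then |r11 * r21| else (|r11| + |r22| + 2) / |r12|)
    (hα : α = c + ∫ t in a..b, |min (q t) 0|)
    (hβ : β = Real.sqrt (α * (1 / (∫ t in a..b, 1 / p t) + α)) + α)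
    (hγ : γ = Real.sqrt (2 * β + 1 / (∫ t in a..b, 1 / p t))) :
    Real.sqrt (∫ t in a..b, ‖u t‖ ^ 2 / p t)
        ≤ β * Real.sqrt (∫ t in a..b, ‖φ t‖ ^ 2 / p t)
      ∧ sSup ((fun x => ‖φ x‖) '' Set.Icc a b)
        ≤ γ * Real.sqrt (∫ t in a..b, ‖φ t‖ ^ 2 / p t) := by
  have huI : Set.uIcc a b = Set.Icc a b := Set.uIcc_of_le hab.le
  have hle := hab.le
  have hP1 : IntervalIntegrable (fun x => 1 / p x) volume a b :=
    (intervalIntegrable_iff_integrableOn_Ioc_of_le hle).mpr hp_int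
  have hq1 : IntervalIntegrable q volume a b :=
    (intervalIntegrable_iff_integrableOn_Ioc_of_le hle).mpr hq_int
  have hw1 : IntervalIntegrable w volume a b :=
    (intervalIntegrable_iff_integrableOn_Ioc_of_le hle).mpr hw_int
  have hφc' : ContinuousOn φ (Set.uIcc a b) := huI ▸ hφc
  have huc' : ContinuousOn u (Set.uIcc a b) := huI ▸ huc
  have hpos : ∀ᵐ x ∂(volume.restrict (Set.Icc a b)), 0 < p x := by
    rw [← Measure.restrict_congr_set (Ioc_ae_eq_Icc (μ := volume) (a := a) (b := b))]
    exact hp_pos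
  -- integrability
  have iw : ∀ g : ℝ → ℝ, ContinuousOn g (Set.uIcc a b) →
      IntervalIntegrable (fun t => g t / p t) volume a b := fun g hg =>
    (hP1.continuousOn_mul hg).congr (fun t _ => by simp [div_eq_mul_inv])
  have iF : IntervalIntegrable (fun t => ‖φ t‖ ^ 2 / p t) volume a b := iw _ (hφc'.norm.pow 2)
  have iU : IntervalIntegrable (fun t => ‖u t‖ ^ 2 / p t) volume a b := iw _ (huc'.norm.pow 2)
  have iC : IntervalIntegrable (fun t => ‖φ t‖ * ‖u t‖ / p t) volume a b :=
    iw _ (hφc'.norm.mul huc'.norm)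
  have iPc : IntervalIntegrable (fun t => ((1 / p t : ℝ) : ℂ)) volume a b := aux_ofReal hP1
  have iqc : IntervalIntegrable (fun t => (q t : ℂ)) volume a b := aux_ofReal hq1
  have iwc : IntervalIntegrable (fun t => (w t : ℂ)) volume a b := aux_ofReal hw1
  have if1 : IntervalIntegrable (fun t => u t / (p t : ℂ)) volume a b :=
    (iPc.continuousOn_mul huc').congr (fun t _ => by simp [div_eq_mul_inv])
  have if2 : IntervalIntegrable (fun t => ((q t : ℂ) - lam * (w t : ℂ)) * φ t) volume a b :=
    (iqc.sub (iwc.const_mul lam)).mul_continuousOn hφc'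
  have huconjc : ContinuousOn (fun t => (starRingEnd ℂ) (u t)) (Set.uIcc a b) :=
    Complex.continuous_conj.comp_continuousOn huc'
  have hφconjc : ContinuousOn (fun t => (starRingEnd ℂ) (φ t)) (Set.Icc a b) :=
    Complex.continuous_conj.comp_continuousOn hφc
  have if3 : IntervalIntegrable (fun t => (starRingEnd ℂ) (u t / (p t : ℂ))) volume a b :=
    (iPc.continuousOn_mul huconjc).congr (fun t _ => by simp [div_eq_mul_inv])
  have hφs := aux_conj hφ
  have prod1 := aux_prod hab if2 if3 huc hφconjc hu hφs
  have prod2 := aux_prod hab if1 if3 hφc hφconjc hφ hφs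
  -- positivity of P
  have hPpos : 0 < ∫ t in a..b, 1 / p t := by
    rw [intervalIntegral.integral_pos_iff_support_of_nonneg_ae' _ hP1]
    · refine ⟨hab, ?_⟩
      have hs : (Function.support (fun t => 1 / p t) ∩ Set.Ioc a b : Set ℝ) =ᵐ[volume] Set.Ioc a b := by
        rw [ae_restrict_iff' measurableSet_Ioc] at hp_pos
        filter_upwards [hp_pos] with x hx
        apply propext
        constructor
        · exact fun h => h.2
        · exact fun h => ⟨(one_div_pos.mpr (hx h)).ne', h⟩
      rw [measure_congr hs]
      simp [hab]
    · rw [Set.uIoc_of_le hle]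
      filter_upwards [hp_pos] with x hx
      exact (one_div_pos.mpr hx).le
  set P := ∫ t in a..b, 1 / p t with hPdef
  set F2 := ∫ t in a..b, ‖φ t‖ ^ 2 / p t with hF2
  set U2 := ∫ t in a..b, ‖u t‖ ^ 2 / p t with hU2
  set C := ∫ t in a..b, ‖φ t‖ * ‖u t‖ / p t with hCdef
  have F2nn : 0 ≤ F2 := intervalIntegral.integral_nonneg_of_ae_restrict hle (by
    filter_upwards [hpos] with x hx; positivity)
  have U2nn : 0 ≤ U2 := intervalIntegral.integral_nonneg_of_ae_restrict hle (by
    filter_upwards [hpos] with x hx; positivity)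
  -- Cauchy-Schwarz
  have hCS : C ≤ √F2 * √U2 := by
    have hd : discrim F2 (2 * C) U2 ≤ 0 := by
      apply discrim_le_zero
      intro s
      have : F2 * (s * s) + 2 * C * s + U2 = ∫ t in a..b, (‖φ t‖ * s + ‖u t‖) ^ 2 / p t := by
        have e : (fun t => (‖φ t‖ * s + ‖u t‖) ^ 2 / p t) = fun t => (s * s) * (‖φ t‖ ^ 2 / p t) +
            (2 * s) * (‖φ t‖ * ‖u t‖ / p t) + ‖u t‖ ^ 2 / p t := by
          funext t; ring
        rw [e, intervalIntegral.integral_add ((iF.const_mul _).add (iC.const_mul _)) iU,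
          intervalIntegral.integral_add (iF.const_mul _) (iC.const_mul _),
          intervalIntegral.integral_const_mul, intervalIntegral.integral_const_mul]
        ring
      rw [this]
      exact intervalIntegral.integral_nonneg_of_ae_restrict hle (by
        filter_upwards [hpos] with x hx; positivity)
    rw [← Real.sqrt_mul F2nn]
    apply Real.le_sqrt_of_sq_le
    rw [discrim] at hd
    nlinarith
  set F := √F2 with hFdef
  set U := √U2 with hUdef
  have hFsq : F ^ 2 = F2 := Real.sq_sqrt F2nn
  have hUsq : U ^ 2 = U2 := Real.sq_sqrt U2nn
  have hFnn : 0 ≤ F := Real.sqrt_nonneg _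
  have hUnn : 0 ≤ U := Real.sqrt_nonneg _
  -- pointwise comparison
  have hcmp : ∀ x ∈ Set.Icc a b, ∀ y ∈ Set.Icc a b, ‖φ x‖ ^ 2 ≤ ‖φ y‖ ^ 2 + 2 * (F * U) := by
    intro x hx y hy
    set h : ℝ → ℂ := fun t => u t / (p t : ℂ) * (starRingEnd ℂ) (φ t) +
      φ t * (starRingEnd ℂ) (u t / (p t : ℂ)) with hh
    have ih : IntervalIntegrable h volume a b :=
      (if1.mul_continuousOn (huI ▸ hφconjc)).add (if3.continuousOn_mul hφc')
    have hsub : ∀ z ∈ Set.Icc a b, IntervalIntegrable h volume a z := fun z hz =>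
      ih.mono_set (Set.uIcc_subset_uIcc_left (huI ▸ hz))
    have e1 := prod2 x hx
    have e2 := prod2 y hy
    have e3 : φ x * (starRingEnd ℂ) (φ x) - φ y * (starRingEnd ℂ) (φ y) = ∫ t in y..x, h t := by
      rw [e1, e2, ← intervalIntegral.integral_interval_sub_left (hsub x hx) (hsub y hy)]
      ring
    have e4 : ‖∫ t in y..x, h t‖ ≤ 2 * C := by
      refine intervalIntegral.norm_integral_le_integral_norm_uIoc.trans ?_
      have hss : Set.uIoc y x ⊆ Set.Ioc a b := by
        rw [← Set.uIoc_of_le hle]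
        exact Set.uIoc_subset_uIoc_of_uIcc_subset_uIcc
          (Set.uIcc_subset_uIcc (huI ▸ hy) (huI ▸ hx))
      have ihn : IntegrableOn (fun t => ‖h t‖) (Set.Ioc a b) :=
        (intervalIntegrable_iff_integrableOn_Ioc_of_le hle).mp ih.norm
      refine (setIntegral_mono_set ihn (Filter.Eventually.of_forall fun _ => norm_nonneg _)
        (Filter.Eventually.of_forall hss)).trans ?_
      rw [← intervalIntegral.integral_of_le hle, hCdef, ← intervalIntegral.integral_const_mul]
      refine intervalIntegral.integral_mono_ae_restrict hle ih.norm (iC.const_mul 2) ?_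
      filter_upwards [hpos] with t ht
      refine (norm_add_le _ _).trans (le_of_eq ?_)
      simp only [norm_mul, norm_div, RCLike.norm_conj, Complex.norm_real, Real.norm_eq_abs,
        abs_of_pos ht]
      ring
    rw [← e3, Complex.mul_conj', Complex.mul_conj'] at e4
    have e5 : ((‖φ x‖ : ℂ) ^ 2 - (‖φ y‖ : ℂ) ^ 2) = ((‖φ x‖ ^ 2 - ‖φ y‖ ^ 2 : ℝ) : ℂ) := by
      push_cast; ring
    rw [e5, Complex.norm_real, Real.norm_eq_abs] at e4
    linarith [(abs_le.mp e4).2]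
  set K := F ^ 2 / P + 2 * (F * U) with hK
  have hbd : ∀ x ∈ Set.Icc a b, ‖φ x‖ ^ 2 ≤ K := by
    intro x hx
    have : ∫ t in a..b, (‖φ x‖ ^ 2 - 2 * (F * U)) * (1 / p t) ≤ F2 := by
      refine intervalIntegral.integral_mono_ae_restrict hle (hP1.const_mul _) iF ?_
      filter_upwards [hpos, ae_restrict_mem measurableSet_Icc] with t ht htm
      rw [div_eq_mul_one_div (‖φ t‖ ^ 2)]
      have := hcmp x hx t htm
      exact mul_le_mul_of_nonneg_right (by linarith) (one_div_pos.mpr ht).le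
    rw [intervalIntegral.integral_const_mul, ← hPdef, ← le_div_iff₀ hPpos, ← hFsq] at this
    linarith
  have hKnn : 0 ≤ K := (sq_nonneg _).trans (hbd a (Set.left_mem_Icc.mpr hle))
  -- boundary terms
  obtain ⟨hB0, hB1⟩ := aux_bdry (φ a) (u a) (φ b) (u b) _ (Complex.norm_exp_ofReal_mul_I θ)
    r11 r12 r21 r22 c K hdet hbcφ hbcu hc (hbd a (Set.left_mem_Icc.mpr hle))
    (hbd b (Set.right_mem_Icc.mpr hle))
  have iA : IntervalIntegrable (fun t => q t * ‖φ t‖ ^ 2) volume a b :=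
    hq1.mul_continuousOn (hφc'.norm.pow 2)
  have iW : IntervalIntegrable (fun t => w t * ‖φ t‖ ^ 2) volume a b :=
    hw1.mul_continuousOn (hφc'.norm.pow 2)
  set A := ∫ t in a..b, q t * ‖φ t‖ ^ 2 with hA
  set W := ∫ t in a..b, w t * ‖φ t‖ ^ 2 with hW
  have hid : u b * (starRingEnd ℂ) (φ b) - u a * (starRingEnd ℂ) (φ a)
      = ((A + U2 : ℝ) : ℂ) - lam * (W : ℂ) := by
    rw [prod1 b (Set.right_mem_Icc.mpr hle), add_sub_cancel_left]
    have e : (fun t => ((q t : ℂ) - lam * (w t : ℂ)) * φ t * (starRingEnd ℂ) (φ t) +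
        u t * (starRingEnd ℂ) (u t / (p t : ℂ))) = fun t =>
        ((q t * ‖φ t‖ ^ 2 + ‖u t‖ ^ 2 / p t : ℝ) : ℂ) - lam * ((w t * ‖φ t‖ ^ 2 : ℝ) : ℂ) := by
      funext t
      have h1 := Complex.mul_conj' (φ t)
      have h2 := Complex.mul_conj' (u t)
      rw [map_div₀, Complex.conj_ofReal, mul_assoc, h1, mul_div_assoc', h2]
      push_cast
      ring
    rw [e, intervalIntegral.integral_sub (aux_ofReal (iA.add iU)) ((aux_ofReal iW).const_mul lam),
      intervalIntegral.integral_const_mul, intervalIntegral.integral_ofReal,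
      intervalIntegral.integral_ofReal, intervalIntegral.integral_add iA iU]
  have hW0 : W = 0 := by
    rw [hid] at hB0
    simp at hB0
    exact hB0.resolve_left hlam
  rw [hid, hW0] at hB1
  simp at hB1
  have iqm : IntervalIntegrable (fun t => |min (q t) 0|) volume a b := by
    refine hq1.norm.mono_fun' ?_ ?_
    · exact ((hqm.min measurable_const).abs).aestronglyMeasurable
    · filter_upwards with t
      simp only [Real.norm_eq_abs, abs_abs]
      exact aux_min _
  have hqm : -A ≤ (∫ t in a..b, |min (q t) 0|) * K := by
    rw [hA, ← intervalIntegral.integral_neg, ← intervalIntegral.integral_mul_const]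
    refine intervalIntegral.integral_mono_ae_restrict hle iA.neg (iqm.mul_const K) ?_
    filter_upwards [ae_restrict_mem measurableSet_Icc] with t ht
    have h1 := hbd t ht
    have h2 : -q t ≤ |min (q t) 0| := by
      rw [abs_of_nonpos (min_le_right _ _)]
      exact neg_le_neg (min_le_left _ _)
    calc -(q t * ‖φ t‖ ^ 2) = -q t * ‖φ t‖ ^ 2 := by ring
      _ ≤ |min (q t) 0| * ‖φ t‖ ^ 2 := by gcongr
      _ ≤ _ := by gcongr
  have hcnn : 0 ≤ c := by rw [hc]; split_ifs <;> positivity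
  have hαnn : 0 ≤ α := by
    rw [hα]
    exact add_nonneg hcnn (intervalIntegral.integral_nonneg hle fun _ _ => abs_nonneg _)
  have hU : U ^ 2 ≤ α * K := by
    rw [hUsq, hα, add_mul]; linarith
  have hmain := aux_final α P F U K hαnn hPpos hFnn hK hU
  rw [← hβ] at hmain
  refine ⟨hmain, ?_⟩
  have hβnn : 0 ≤ β := by rw [hβ]; positivity
  apply csSup_le ((Set.nonempty_Icc.mpr hle).image _)
  rintro _ ⟨x, hx, rfl⟩
  rw [hγ]
  have h3 : ‖φ x‖ ^ 2 ≤ (2 * β + 1 / P) * F ^ 2 := by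
    refine (hbd x hx).trans ?_
    rw [hK]
    have : F ^ 2 / P = 1 / P * F ^ 2 := by ring
    rw [this]
    nlinarith
  have h4 := Real.le_sqrt_of_sq_le h3
  rwa [Real.sqrt_mul (by positivity), Real.sqrt_sq hFnn] at h4
end

section
/- Fix l, r ∈ ℝ and let α, β, γ be built from c := |l| + |r|. Assume there exists a real-valued absolutely continuous function g on [a,b] with g(a) = g(b) = 0, ∫ₐᵇ p|g'|² < ∞, and g(x)w(x) > 0 a.e. on (a,b), and let ε > 0 satisfy μ_{1/p}({x ∈ [a,b] : p(x)g(x)w(x) < ε}) ≤ 1/(2γ²). Then every λ ∈ ℂ with Im λ ≠ 0 for which there exists a solution (φ, u) of −(pφ')' + qφ = λwφ with φ not identically zero and u(a) = l·φ(a), u(b) = r·φ(b), satisfies |Im λ| ≤ (2/ε)·β·γ·‖g'‖_{p,2} and |Re λ| ≤ (2/ε)·(β·γ·‖g'‖_{p,2} + (β² + γ²‖q‖_{L¹})·‖g‖_∞). -/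
open MeasureTheory Real Complex

/-- `F` is the primitive of the integrable function `f` on `[a,b]`. -/
def IsPrim (a b : ℝ) (F f : ℝ → ℂ) : Prop :=
  IntervalIntegrable f volume a b ∧ ∀ x ∈ Set.Icc a b, F x = F a + ∫ t in a..x, f t

theorem ac_integral {a b : ℝ} {f : ℝ → ℂ} (hf : IntervalIntegrable f volume a b) :
    AbsolutelyContinuousOnInterval (fun x => ∫ t in a..x, f t) a b := by
  have hre : IntervalIntegrable (fun t => ‖f t‖) volume a b := hf.norm
  have h := hre.absolutelyContinuousOnInterval_intervalIntegral (c := a) (by simp)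
  rw [absolutelyContinuousOnInterval_iff] at h ⊢
  intro ε hε
  obtain ⟨δ, hδ, H⟩ := h ε hε
  refine ⟨δ, hδ, fun E hE hE2 => lt_of_le_of_lt ?_ (H E hE hE2)⟩
  apply Finset.sum_le_sum
  intro i hi
  have hm := hE.1 i hi
  have h1 : Set.uIcc a (E.2 i).1 ⊆ Set.uIcc a b := Set.uIcc_subset_uIcc (by simp) hm.1
  have h2 : Set.uIcc a (E.2 i).2 ⊆ Set.uIcc a b := Set.uIcc_subset_uIcc (by simp) hm.2
  rw [dist_eq_norm, dist_eq_norm,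
    intervalIntegral.integral_interval_sub_left (hf.mono_set h1) (hf.mono_set h2),
    intervalIntegral.integral_interval_sub_left (hre.mono_set h1) (hre.mono_set h2)]
  exact intervalIntegral.norm_integral_le_abs_integral_norm

theorem IsPrim.continuousOn {a b : ℝ} (hab : a ≤ b) {F f : ℝ → ℂ} (hF : IsPrim a b F f) :
    ContinuousOn F (Set.Icc a b) := by
  have h := (ac_integral hF.1).continuousOn
  rw [Set.uIcc_of_le hab] at h
  exact (continuousOn_const.add h).congr hF.2

theorem IsPrim.mul {a b : ℝ} (hab : a ≤ b) {F f G g : ℝ → ℂ}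
    (hF : IsPrim a b F f) (hG : IsPrim a b G g) :
    IsPrim a b (fun x => F x * G x) (fun x => f x * G x + F x * g x) := by
  have hFc := hF.continuousOn hab
  have hGc := hG.continuousOn hab
  have hu := Set.uIcc_of_le hab
  have hint : IntervalIntegrable (fun x => f x * G x + F x * g x) volume a b :=
    (hF.1.mul_continuousOn (by rwa [hu])).add (hG.1.continuousOn_mul (by rwa [hu]))
  refine ⟨hint, ?_⟩
  have hconst : ∀ c : ℂ, AbsolutelyContinuousOnInterval (fun _ : ℝ => c) a b := fun c =>
    (LipschitzOnWith.absolutelyContinuousOnInterval (K := 0)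
      (LipschitzWith.const c).lipschitzOnWith)
  let F1 : ℝ → ℂ := fun x => F a + ∫ t in a..x, f t
  let G1 : ℝ → ℂ := fun x => G a + ∫ t in a..x, g t
  have hF1 : AbsolutelyContinuousOnInterval F1 a b := (hconst (F a)).add (ac_integral hF.1)
  have hG1 : AbsolutelyContinuousOnInterval G1 a b := (hconst (G a)).add (ac_integral hG.1)
  let H : ℝ → ℂ := F1 • G1 - fun x => ∫ t in a..x, (f t * G t + F t * g t)
  have hH : AbsolutelyContinuousOnInterval H a b := (hF1.smul hG1).sub (ac_integral hint)
  obtain ⟨C, hC⟩ := hH.const_of_ae_hasDerivAt_zero (by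
    filter_upwards [hF.1.ae_hasDerivAt_integral, hG.1.ae_hasDerivAt_integral,
      hint.ae_hasDerivAt_integral] with x h1 h2 h3 hx
    have e1 : HasDerivAt F1 (f x) x := (h1 hx a (by simp)).const_add (F a)
    have e2 : HasDerivAt G1 (g x) x := (h2 hx a (by simp)).const_add (G a)
    have e3 := h3 hx a (by simp)
    have e4 := (e1.mul e2).sub e3
    rw [hu] at hx
    have hz : f x * G1 x + F1 x * g x - (f x * G x + F x * g x) = 0 := by
      simp only [F1, G1]
      rw [← hF.2 x hx, ← hG.2 x hx]; ring
    rw [hz] at e4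
    exact e4)
  intro x hx
  have c1 := hC x (by rwa [hu])
  have c2 := hC a (by simp)
  simp only [H, F1, G1, Pi.sub_apply, Pi.mul_apply, smul_eq_mul,
    intervalIntegral.integral_same, add_zero, sub_zero] at c1 c2
  rw [← hF.2 x hx, ← hG.2 x hx] at c1
  beta_reduce
  rw [c2, ← c1]; ring

theorem IsPrim.conj {a b : ℝ} {F f : ℝ → ℂ} (hF : IsPrim a b F f) :
    IsPrim a b (fun x => (starRingEnd ℂ) (F x)) (fun x => (starRingEnd ℂ) (f x)) := by
  constructor
  · exact ⟨(Complex.conjLIE.toContinuousLinearEquiv.toContinuousLinearMap).integrable_comp hF.1.1,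
      (Complex.conjLIE.toContinuousLinearEquiv.toContinuousLinearMap).integrable_comp hF.1.2⟩
  · intro x hx
    beta_reduce
    rw [hF.2 x hx, map_add]
    congr 1
    simp only [intervalIntegral, map_sub, ← integral_conj]

theorem cauchy_schwarz {μ : Measure ℝ} {f h : ℝ → ℝ} (hf0 : 0 ≤ᵐ[μ] f) (hh0 : 0 ≤ᵐ[μ] h)
    (hf : AEStronglyMeasurable f μ) (hh : AEStronglyMeasurable h μ)
    (hf2 : Integrable (fun x => f x ^ 2) μ) (hh2 : Integrable (fun x => h x ^ 2) μ) :
    Integrable (fun x => f x * h x) μ ∧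
    ∫ x, f x * h x ∂μ ≤ √(∫ x, f x ^ 2 ∂μ) * √(∫ x, h x ^ 2 ∂μ) := by
  have mf : MemLp f 2 μ := (memLp_two_iff_integrable_sq hf).2 hf2
  have mh : MemLp h 2 μ := (memLp_two_iff_integrable_sq hh).2 hh2
  refine ⟨mf.integrable_mul mh, ?_⟩
  have := integral_mul_le_Lp_mul_Lq_of_nonneg (p := 2) (q := 2) (μ := μ)
    (by constructor <;> norm_num) hf0 hh0 (by simpa using mf) (by simpa using mh)
  simpa [Real.sqrt_eq_rpow] using this

/-- abstract algebra behind the a priori bounds -/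
theorem alg_bounds {I α β γ D N M : ℝ} (hI : 0 < I) (hα : 0 ≤ α) (hN : 0 ≤ N)
    (hM : 0 < M)
    (hβ : β = √(α * (1 / I + α)) + α) (hγ : γ = √(2 * β + 1 / I))
    (h1 : D ^ 2 ≤ α * M ^ 2) (h2 : M ^ 2 * I ≤ N ^ 2 + 2 * (D * N) * I) :
    0 ≤ β ∧ 0 < γ ∧ D ≤ β * N ∧ M ≤ γ * N ∧ 0 < N := by
  have hI' : 0 < 1 / I := by positivity
  have hs0 : 0 ≤ √(α * (1 / I + α)) := Real.sqrt_nonneg _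
  have hβ0 : 0 ≤ β := by rw [hβ]; positivity
  have hs : √(α * (1 / I + α)) ^ 2 = α * (1 / I + α) := Real.sq_sqrt (by positivity)
  have hγ0 : 0 < γ := by rw [hγ]; positivity
  have hγ2 : γ ^ 2 = 2 * β + 1 / I := by rw [hγ]; exact Real.sq_sqrt (by positivity)
  have h2' : M ^ 2 ≤ N ^ 2 * (1 / I) + 2 * (D * N) := by
    have : M ^ 2 * I * (1 / I) ≤ (N ^ 2 + 2 * (D * N) * I) * (1 / I) := by gcongr
    have e : I * (1 / I) = 1 := by field_simp
    calc M ^ 2 = M ^ 2 * (I * (1 / I)) := by rw [e]; ring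
      _ ≤ (N ^ 2 + 2 * (D * N) * I) * (1 / I) := by linarith
      _ = N ^ 2 * (1 / I) + 2 * (D * N) * (I * (1 / I)) := by ring
      _ = _ := by rw [e]; ring
  have hDβ : D ≤ β * N := by
    have h3 : D ^ 2 ≤ α * (N ^ 2 * (1 / I) + 2 * (D * N)) := h1.trans (by gcongr)
    have h4 : (D - α * N) ^ 2 ≤ (√(α * (1 / I + α)) * N) ^ 2 := by
      rw [mul_pow, hs]; nlinarith
    have h5 := abs_le_of_sq_le_sq' h4 (by positivity)
    rw [hβ]; linarith [h5.2]
  have hMγ : M ≤ γ * N := by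
    apply le_of_sq_le_sq _ (by positivity)
    rw [mul_pow, hγ2]
    nlinarith [mul_le_mul_of_nonneg_right hDβ hN]
  refine ⟨hβ0, hγ0, hDβ, hMγ, ?_⟩
  rcases hN.eq_or_lt with h | h
  · rw [← h] at hMγ; simp at hMγ; linarith
  · exact h

theorem cs_weight {μ : Measure ℝ} {p A B : ℝ → ℝ} (hp : Measurable p) (hpos : ∀ᵐ x ∂μ, 0 < p x)
    (hA0 : ∀ x, 0 ≤ A x) (hB0 : ∀ x, 0 ≤ B x ∨ p x ≤ 0)
    (hA : AEStronglyMeasurable A μ) (hB : AEStronglyMeasurable B μ)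
    (hA2 : Integrable (fun x => A x ^ 2 / p x) μ) (hB2 : Integrable (fun x => B x ^ 2 / p x) μ) :
    Integrable (fun x => A x * B x / p x) μ ∧
    ∫ x, A x * B x / p x ∂μ ≤ √(∫ x, A x ^ 2 / p x ∂μ) * √(∫ x, B x ^ 2 / p x ∂μ) := by
  have hsm : AEStronglyMeasurable (fun x => (√(p x))⁻¹) μ :=
    (hp.sqrt.inv).aestronglyMeasurable
  have ea : (fun x => (A x * (√(p x))⁻¹) ^ 2) =ᵐ[μ] fun x => A x ^ 2 / p x := by
    filter_upwards [hpos] with x hx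
    rw [mul_pow, inv_pow, Real.sq_sqrt hx.le]; rfl
  have eb : (fun x => (B x * (√(p x))⁻¹) ^ 2) =ᵐ[μ] fun x => B x ^ 2 / p x := by
    filter_upwards [hpos] with x hx
    rw [mul_pow, inv_pow, Real.sq_sqrt hx.le]; rfl
  have ec : (fun x => (A x * (√(p x))⁻¹) * (B x * (√(p x))⁻¹)) =ᵐ[μ]
      fun x => A x * B x / p x := by
    filter_upwards [hpos] with x hx
    have : (√(p x))⁻¹ * (√(p x))⁻¹ = (p x)⁻¹ := by
      rw [← mul_inv, Real.mul_self_sqrt hx.le]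
    rw [div_eq_mul_inv, ← this]; ring
  have h := cauchy_schwarz (μ := μ) (f := fun x => A x * (√(p x))⁻¹)
    (h := fun x => B x * (√(p x))⁻¹)
    (Filter.Eventually.of_forall fun x => mul_nonneg (hA0 x) (by positivity))
    (by
      filter_upwards [hpos] with x hx
      rcases hB0 x with h | h
      · exact mul_nonneg h (by positivity)
      · exact absurd hx (not_lt.2 h))
    (hA.mul hsm) (hB.mul hsm) (hA2.congr ea.symm) (hB2.congr eb.symm)
  rw [integral_congr_ae ea, integral_congr_ae eb, integral_congr_ae ec] at h
  exact ⟨h.1.congr ec, h.2⟩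

/-- The energy density identity: `u * conj φ` is a primitive of `k₁ - λ k₂`. -/
theorem energy_prim {a b : ℝ} (hab : a ≤ b) {p q w : ℝ → ℝ} {lam : ℂ} {φ u : ℝ → ℂ}
    (hφ : IsPrim a b φ (fun t => u t / (p t : ℂ)))
    (hu : IsPrim a b u (fun t => ((q t : ℂ) - lam * (w t : ℂ)) * φ t)) :
    IsPrim a b (fun x => u x * (starRingEnd ℂ) (φ x))
      (fun t => ((‖u t‖ ^ 2 / p t + q t * ‖φ t‖ ^ 2 : ℝ) : ℂ)
        - lam * ((w t * ‖φ t‖ ^ 2 : ℝ) : ℂ)) := by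
  have h := hu.mul hab hφ.conj
  convert h using 2 with t
  have e1 : φ t * (starRingEnd ℂ) (φ t) = ((‖φ t‖ ^ 2 : ℝ) : ℂ) := by
    rw [Complex.mul_conj, Complex.normSq_eq_norm_sq]
  have e2 : u t * (starRingEnd ℂ) (u t) = ((‖u t‖ ^ 2 : ℝ) : ℂ) := by
    rw [Complex.mul_conj, Complex.normSq_eq_norm_sq]
  rw [map_div₀, Complex.conj_ofReal, mul_assoc, e1, ← mul_div_assoc, e2]
  push_cast
  ring

/-- Sobolev type bound. -/
theorem sup_bound {a b : ℝ} (hab : a ≤ b) {p : ℝ → ℝ} (hpm : Measurable p) {φ u : ℝ → ℂ}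
    (hp_pos : ∀ᵐ x ∂(volume.restrict (Set.Ioc a b)), 0 < p x)
    (hp_int : IntervalIntegrable (fun x => 1 / p x) volume a b)
    (hφ : IsPrim a b φ (fun t => u t / (p t : ℂ)))
    (huc : ContinuousOn u (Set.Icc a b)) (x0 : ℝ) (hx0 : x0 ∈ Set.Icc a b) :
    ‖φ x0‖ ^ 2 * (∫ t in a..b, 1 / p t) ≤ √(∫ t in a..b, ‖φ t‖ ^ 2 / p t) ^ 2
      + 2 * (√(∫ t in a..b, ‖u t‖ ^ 2 / p t) * √(∫ t in a..b, ‖φ t‖ ^ 2 / p t))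
        * (∫ t in a..b, 1 / p t) := by
  have hφc := hφ.continuousOn hab
  have hui := Set.uIcc_of_le hab
  have hu2 : IntervalIntegrable (fun t => ‖u t‖ ^ 2 / p t) volume a b := by
    have := hp_int.continuousOn_mul (g := fun t => ‖u t‖ ^ 2) (by rw [hui]; exact (huc.norm.pow 2))
    simpa only [mul_one_div] using this
  have hφ2 : IntervalIntegrable (fun t => ‖φ t‖ ^ 2 / p t) volume a b := by
    have := hp_int.continuousOn_mul (g := fun t => ‖φ t‖ ^ 2) (by rw [hui]; exact (hφc.norm.pow 2))
    simpa only [mul_one_div] using this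
  have hs := hφ.mul hab hφ.conj
  set s : ℝ → ℂ := fun t => u t / (p t : ℂ) * (starRingEnd ℂ) (φ t)
    + φ t * (starRingEnd ℂ) (u t / (p t : ℂ)) with hsdef
  have hcs := cs_weight (μ := volume.restrict (Set.Ioc a b)) (p := p) (A := fun t => ‖u t‖)
    (B := fun t => ‖φ t‖) hpm hp_pos (fun x => norm_nonneg _) (fun x => Or.inl (norm_nonneg _))
    ((huc.mono Set.Ioc_subset_Icc_self).norm.aestronglyMeasurable measurableSet_Ioc)
    ((hφc.mono Set.Ioc_subset_Icc_self).norm.aestronglyMeasurable measurableSet_Ioc)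
    hu2.1 hφ2.1
  have hS : ∫ t in a..b, ‖s t‖ ≤
      2 * (√(∫ t in a..b, ‖u t‖ ^ 2 / p t) * √(∫ t in a..b, ‖φ t‖ ^ 2 / p t)) := by
    simp only [intervalIntegral.integral_of_le hab]
    refine le_trans ?_ (mul_le_mul_of_nonneg_left hcs.2 (by norm_num))
    rw [← integral_const_mul]
    refine integral_mono_ae hs.1.norm.1 (hcs.1.const_mul 2) ?_
    filter_upwards [hp_pos] with t ht
    refine (norm_add_le _ _).trans (le_of_eq ?_)
    simp only [norm_mul, norm_div, RCLike.norm_conj, Complex.norm_real, Real.norm_eq_abs,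
      abs_of_pos ht]
    ring
  have hpt : ∀ y ∈ Set.Icc a b, ‖φ x0‖ ^ 2 ≤ ‖φ y‖ ^ 2 + ∫ t in a..b, ‖s t‖ := by
    intro y hy
    have e1 := hs.2 x0 hx0
    have e2 := hs.2 y hy
    simp only [Complex.mul_conj, Complex.normSq_eq_norm_sq] at e1 e2
    have m1 : IntervalIntegrable s volume a x0 :=
      hs.1.mono_set (Set.uIcc_subset_uIcc (by simp) (by rwa [hui]))
    have m2 : IntervalIntegrable s volume a y :=
      hs.1.mono_set (Set.uIcc_subset_uIcc (by simp) (by rwa [hui]))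
    have e3 : ((‖φ x0‖ ^ 2 - ‖φ y‖ ^ 2 : ℝ) : ℂ) = ∫ t in y..x0, s t := by
      rw [← intervalIntegral.integral_interval_sub_left m1 m2]
      push_cast at e1 e2 ⊢
      rw [e1, e2]; ring
    have e4 : ‖φ x0‖ ^ 2 - ‖φ y‖ ^ 2 ≤ ‖∫ t in y..x0, s t‖ := by
      rw [← e3, Complex.norm_real]; exact le_abs_self _
    have e5 : ‖∫ t in y..x0, s t‖ ≤ ∫ t in a..b, ‖s t‖ := by
      refine intervalIntegral.norm_integral_le_integral_norm_uIoc.trans ?_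
      rw [intervalIntegral.integral_of_le hab]
      refine setIntegral_mono_set hs.1.norm.1 (Filter.Eventually.of_forall fun t => norm_nonneg _)
        (LE.le.eventuallyLE ?_)
      intro t ht
      rw [Set.uIoc, Set.mem_Ioc] at ht
      exact ⟨lt_of_le_of_lt (le_min hy.1 hx0.1) ht.1, ht.2.trans (max_le hy.2 hx0.2)⟩
    linarith
  have hmain : ‖φ x0‖ ^ 2 * (∫ t in a..b, 1 / p t) ≤ (∫ t in a..b, ‖φ t‖ ^ 2 / p t)
      + (∫ t in a..b, ‖s t‖) * (∫ t in a..b, 1 / p t) := by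
    rw [← intervalIntegral.integral_const_mul, ← intervalIntegral.integral_const_mul,
      ← intervalIntegral.integral_add hφ2 (hp_int.const_mul _)]
    simp only [intervalIntegral.integral_of_le hab]
    refine integral_mono_ae (hp_int.const_mul _).1 (hφ2.add (hp_int.const_mul _)).1 ?_
    filter_upwards [hp_pos, ae_restrict_mem measurableSet_Ioc] with t ht htm
    have := hpt t (Set.Ioc_subset_Icc_self htm)
    rw [intervalIntegral.integral_of_le hab] at this
    have h2 := mul_le_mul_of_nonneg_right this (one_div_pos.2 ht).le
    rw [add_mul, mul_one_div (‖φ t‖ ^ 2)] at h2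
    exact h2
  have hI0 : 0 ≤ ∫ t in a..b, 1 / p t := by
    rw [intervalIntegral.integral_of_le hab]
    apply integral_nonneg_of_ae
    filter_upwards [hp_pos] with t ht using (one_div_pos.2 ht).le
  have hN0 : 0 ≤ ∫ t in a..b, ‖φ t‖ ^ 2 / p t := by
    rw [intervalIntegral.integral_of_le hab]
    apply integral_nonneg_of_ae
    filter_upwards [hp_pos] with t ht using div_nonneg (by positivity) ht.le
  rw [Real.sq_sqrt hN0]
  exact hmain.trans (by gcongr)

/-- The lower bound of the weighted integral. -/
theorem lower_bound {a b : ℝ} (hab : a ≤ b) {p w g : ℝ → ℝ} {φ : ℝ → ℂ}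
    (hpm : Measurable p) (hwm : Measurable w)
    (hp_pos : ∀ᵐ x ∂(volume.restrict (Set.Ioc a b)), 0 < p x)
    (hp_int : IntervalIntegrable (fun x => 1 / p x) volume a b)
    (hw_int : IntervalIntegrable w volume a b)
    (hgc : ContinuousOn g (Set.Icc a b)) (hφc : ContinuousOn φ (Set.Icc a b))
    (hgw : ∀ᵐ x ∂(volume.restrict (Set.Ioc a b)), 0 < g x * w x)
    {ε δ M : ℝ} (hε : 0 < ε) (hδ : 0 ≤ δ) (hM : ∀ x ∈ Set.Icc a b, ‖φ x‖ ≤ M)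
    (hεcond : (volume.withDensity fun x => ENNReal.ofReal (1 / p x))
        {x | x ∈ Set.Icc a b ∧ p x * g x * w x < ε} ≤ ENNReal.ofReal δ) :
    ε * ((∫ t in a..b, ‖φ t‖ ^ 2 / p t) - M ^ 2 * δ)
      ≤ ∫ t in a..b, g t * (w t * ‖φ t‖ ^ 2) := by
  have hui := Set.uIcc_of_le hab
  have hφ2 : IntervalIntegrable (fun t => ‖φ t‖ ^ 2 / p t) volume a b := by
    have := hp_int.continuousOn_mul (g := fun t => ‖φ t‖ ^ 2) (by rw [hui]; exact (hφc.norm.pow 2))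
    simpa only [mul_one_div] using this
  have hK : IntervalIntegrable (fun t => g t * (w t * ‖φ t‖ ^ 2)) volume a b := by
    refine IntervalIntegrable.continuousOn_mul ?_ (by rwa [hui])
    refine hw_int.mul_continuousOn ?_
    rw [hui]; exact (hφc.norm.pow 2)
  set Ω : Set ℝ := {x | x ∈ Set.Icc a b ∧ p x * g x * w x < ε} with hΩ
  have hg1 : Measurable ((Set.Icc a b).indicator g) := by
    have := hgc.measurable_piecewise (g := fun _ => (0 : ℝ)) continuousOn_const measurableSet_Icc
    have e : (Set.Icc a b).piecewise g (fun _ => (0 : ℝ)) = (Set.Icc a b).indicator g :=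
      Set.piecewise_eq_indicator
    rwa [e] at this
  have hΩm : MeasurableSet Ω := by
    have : Ω = Set.Icc a b ∩ {x | p x * (Set.Icc a b).indicator g x * w x < ε} := by
      ext x
      simp only [hΩ, Set.mem_ofPred_eq, Set.mem_inter_iff]
      refine and_congr_right fun hx => ?_
      rw [Set.indicator_of_mem hx]
    rw [this]
    exact measurableSet_Icc.inter (measurableSet_lt ((hpm.mul hg1).mul hwm) measurable_const)
  have hind : Integrable (Ω.indicator fun x => 1 / p x) (volume.restrict (Set.Ioc a b)) :=
    hp_int.1.indicator hΩm
  have hJ : ∫ x in Set.Ioc a b, Ω.indicator (fun x => 1 / p x) x ≤ δ := by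
    rw [integral_eq_lintegral_of_nonneg_ae _ hind.1]
    · refine ENNReal.toReal_le_of_le_ofReal hδ (le_trans ?_ hεcond)
      rw [withDensity_apply _ hΩm, ← lintegral_indicator hΩm]
      refine (setLIntegral_le_lintegral _ _).trans (le_of_eq ?_)
      congr 1
      funext x
      by_cases hx : x ∈ Ω <;> simp [hx]
    · filter_upwards [hp_pos] with x hx
      by_cases hxΩ : x ∈ Ω
      · simpa [hxΩ] using hx.le
      · simp [hxΩ]
  have hle : ∫ x in Set.Ioc a b, (ε * (‖φ x‖ ^ 2 / p x)
        - ε * M ^ 2 * Ω.indicator (fun x => 1 / p x) x)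
      ≤ ∫ t in Set.Ioc a b, g t * (w t * ‖φ t‖ ^ 2) := by
    refine integral_mono_ae ((hφ2.1.const_mul _).sub (hind.const_mul _)) hK.1 ?_
    filter_upwards [hp_pos, hgw, ae_restrict_mem measurableSet_Ioc] with x hpx hgx hxm
    have hxm' := Set.Ioc_subset_Icc_self hxm
    by_cases hx : x ∈ Ω
    · rw [Set.indicator_of_mem hx]
      have h1 : ‖φ x‖ ^ 2 ≤ M ^ 2 := pow_le_pow_left₀ (norm_nonneg _) (hM x hxm') 2
      have h2 : ‖φ x‖ ^ 2 * (1 / p x) ≤ M ^ 2 * (1 / p x) :=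
        mul_le_mul_of_nonneg_right h1 (one_div_pos.2 hpx).le
      have h3 : 0 ≤ g x * (w x * ‖φ x‖ ^ 2) := by
        rw [← mul_assoc]; exact mul_nonneg hgx.le (by positivity)
      rw [mul_one_div] at h2
      nlinarith
    · rw [Set.indicator_of_notMem hx]
      have h1 : ε ≤ p x * g x * w x := by
        by_contra hcon
        exact hx ⟨hxm', not_le.1 hcon⟩
      have h2 : ε / p x ≤ g x * w x := by
        rw [div_le_iff₀ hpx]; linarith
      have h3 := mul_le_mul_of_nonneg_right h2 (sq_nonneg ‖φ x‖)
      calc ε * (‖φ x‖ ^ 2 / p x) - ε * M ^ 2 * 0 = ε / p x * ‖φ x‖ ^ 2 := by ring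
        _ ≤ _ := h3
        _ = _ := by ring
  rw [integral_sub (hφ2.1.const_mul _) (hind.const_mul _), integral_const_mul,
    integral_const_mul] at hle
  rw [intervalIntegral.integral_of_le hab, intervalIntegral.integral_of_le hab]
  have : ε * M ^ 2 * ∫ x in Set.Ioc a b, Ω.indicator (fun x => 1 / p x) x ≤ ε * M ^ 2 * δ :=
    mul_le_mul_of_nonneg_left hJ (by positivity)
  linarith

/-- final algebra -/
theorem alg_final {ε K N M D β γ G S Q X : ℝ} (hε : 0 < ε) (hN : 0 < N)
    (hD : 0 ≤ D) (hM : 0 ≤ M) (hG : 0 ≤ G) (hS : 0 ≤ S) (hQ : 0 ≤ Q) (hX : 0 ≤ X)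
    (hK : ε * (N ^ 2 / 2) ≤ K) (hDN : D ≤ β * N) (hMN : M ≤ γ * N) (hγ : 0 ≤ γ)
    (h : X * K ≤ M * (G * D) + S * (D ^ 2 + Q * M ^ 2)) :
    X ≤ 2 / ε * (β * γ * G + (β ^ 2 + γ ^ 2 * Q) * S) := by
  have h1 : M * (G * D) ≤ γ * N * (G * (β * N)) := by gcongr
  have h2 : S * (D ^ 2 + Q * M ^ 2) ≤ S * ((β * N) ^ 2 + Q * (γ * N) ^ 2) := by gcongr
  have h3 : X * (ε * (N ^ 2 / 2)) ≤ X * K := by gcongr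
  have h4 : (X * ε) * N ^ 2 ≤ (2 * (β * γ * G + (β ^ 2 + γ ^ 2 * Q) * S)) * N ^ 2 := by
    nlinarith
  have h5 := le_of_mul_le_mul_right h4 (by positivity)
  rw [div_mul_eq_mul_div, le_div_iff₀ hε]
  exact h5


/-- Theorem 3.2 of the paper for separated self-adjoint boundary conditions:
bounds on the real and imaginary parts of non-real eigenvalues of the
indefinite Sturm–Liouville problem. -/
theorem nonreal_eigenvalue_bounds_separated
    (a b : ℝ) (hab : a < b) (p q w : ℝ → ℝ)
    (hpm : Measurable p) (hqm : Measurable q) (hwm : Measurable w)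
    (hp_pos : ∀ᵐ x ∂(volume.restrict (Set.Ioc a b)), 0 < p x)
    (hp_int : IntegrableOn (fun x => 1 / p x) (Set.Ioc a b))
    (hq_int : IntegrableOn q (Set.Ioc a b))
    (hw_int : IntegrableOn w (Set.Ioc a b))
    (hw_ne : ∀ᵐ x ∂(volume.restrict (Set.Ioc a b)), w x ≠ 0)
    (hw_pos : 0 < volume {x ∈ Set.Ioc a b | 0 < w x})
    (hw_neg : 0 < volume {x ∈ Set.Ioc a b | w x < 0})
    (l r : ℝ) (c α β γ : ℝ)
    (hc : c = |l| + |r|)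
    (hα : α = c + ∫ t in a..b, |min (q t) 0|)
    (hβ : β = Real.sqrt (α * (1 / (∫ t in a..b, 1 / p t) + α)) + α)
    (hγ : γ = Real.sqrt (2 * β + 1 / (∫ t in a..b, 1 / p t)))
    -- the comparison function g, absolutely continuous with a.e. derivative g'
    (g g' : ℝ → ℝ) (hg'm : Measurable g')
    (hg'int : IntegrableOn g' (Set.Icc a b))
    (hgAC : ∀ x ∈ Set.Icc a b, g x = g a + ∫ t in a..x, g' t)
    (hga : g a = 0) (hgb : g b = 0)
    (hg'2 : IntegrableOn (fun t => p t * g' t ^ 2) (Set.Ioc a b))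
    (hgw : ∀ᵐ x ∂(volume.restrict (Set.Ioc a b)), 0 < g x * w x)
    (ε : ℝ) (hε : 0 < ε)
    (hεcond : (volume.withDensity fun x => ENNReal.ofReal (1 / p x))
        {x | x ∈ Set.Icc a b ∧ p x * g x * w x < ε} ≤ ENNReal.ofReal (1 / (2 * γ ^ 2))) :
    ∀ lam : ℂ, lam.im ≠ 0 →
      ∀ φ u : ℝ → ℂ,
        ContinuousOn φ (Set.Icc a b) → ContinuousOn u (Set.Icc a b) →
        (∀ x ∈ Set.Icc a b, φ x = φ a + ∫ t in a..x, u t / (p t : ℂ)) →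
        (∀ x ∈ Set.Icc a b,
            u x = u a + ∫ t in a..x, ((q t : ℂ) - lam * (w t : ℂ)) * φ t) →
        (∃ x ∈ Set.Icc a b, φ x ≠ 0) →
        u a = (l : ℂ) * φ a → u b = (r : ℂ) * φ b →
        |lam.im| ≤ 2 / ε * β * γ * Real.sqrt (∫ t in a..b, p t * g' t ^ 2)
          ∧ |lam.re| ≤ 2 / ε *
              (β * γ * Real.sqrt (∫ t in a..b, p t * g' t ^ 2)
                + (β ^ 2 + γ ^ 2 * ∫ t in a..b, |q t|)
                    * sSup ((fun x => |g x|) '' Set.Icc a b)) := by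
  intro lam hlam φ u hφc huc hφe hue hne hua hub
  have hab' := hab.le
  have hui := Set.uIcc_of_le hab'
  have ii : ∀ {f : ℝ → ℝ}, IntegrableOn f (Set.Ioc a b) → IntervalIntegrable f volume a b :=
    fun h => (intervalIntegrable_iff_integrableOn_Ioc_of_le hab').2 h
  have iP := ii hp_int
  have iq := ii hq_int
  have iw := ii hw_int
  have hφP : IsPrim a b φ (fun t => u t / (p t : ℂ)) := by
    refine ⟨?_, hφe⟩
    have h1 : IntervalIntegrable (fun t => ((1 / p t : ℝ) : ℂ)) volume a b :=
      ⟨iP.1.ofReal, iP.2.ofReal⟩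
    have := h1.continuousOn_mul (g := u) (by rwa [hui])
    simpa only [Complex.ofReal_div, Complex.ofReal_one, mul_one_div] using this
  have huP : IsPrim a b u (fun t => ((q t : ℂ) - lam * (w t : ℂ)) * φ t) := by
    refine ⟨?_, hue⟩
    have h1 : IntervalIntegrable (fun t => ((q t : ℝ) : ℂ)) volume a b :=
      ⟨iq.1.ofReal, iq.2.ofReal⟩
    have h2 : IntervalIntegrable (fun t => ((w t : ℝ) : ℂ)) volume a b :=
      ⟨iw.1.ofReal, iw.2.ofReal⟩
    exact (h1.sub (h2.const_mul lam)).mul_continuousOn (by rwa [hui])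
  have hgP : IsPrim a b (fun x => (g x : ℂ)) (fun x => (g' x : ℂ)) := by
    have h1 : IntervalIntegrable g' volume a b :=
      ii (hg'int.mono_set Set.Ioc_subset_Icc_self)
    refine ⟨⟨h1.1.ofReal, h1.2.ofReal⟩, fun x hx => ?_⟩
    rw [intervalIntegral.integral_ofReal]
    beta_reduce
    exact_mod_cast hgAC x hx
  have hgc : ContinuousOn g (Set.Icc a b) := by
    have := Complex.continuous_re.comp_continuousOn (hgP.continuousOn hab')
    exact this.congr (fun x _ => by simp)
  -- the maximum of |φ|
  obtain ⟨x0, hx0, hmax⟩ := isCompact_Icc.exists_isMaxOn (Set.nonempty_Icc.2 hab') hφc.norm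
  have hM : ∀ x ∈ Set.Icc a b, ‖φ x‖ ≤ ‖φ x0‖ := fun x hx => hmax hx
  set M := ‖φ x0‖ with hMdef
  have hMpos : 0 < M := by
    obtain ⟨x, hx, hx'⟩ := hne
    exact lt_of_lt_of_le (norm_pos_iff.2 hx') (hM x hx)
  have hM2 : ∀ x ∈ Set.Icc a b, ‖φ x‖ ^ 2 ≤ M ^ 2 :=
    fun x hx => pow_le_pow_left₀ (norm_nonneg _) (hM x hx) 2
  -- integrability
  have hu2 : IntervalIntegrable (fun t => ‖u t‖ ^ 2 / p t) volume a b := by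
    have := iP.continuousOn_mul (g := fun t => ‖u t‖ ^ 2) (by rw [hui]; exact (huc.norm.pow 2))
    simpa only [mul_one_div] using this
  have hq2 : IntervalIntegrable (fun t => q t * ‖φ t‖ ^ 2) volume a b :=
    iq.mul_continuousOn (by rw [hui]; exact (hφc.norm.pow 2))
  have hw2 : IntervalIntegrable (fun t => w t * ‖φ t‖ ^ 2) volume a b :=
    iw.mul_continuousOn (by rw [hui]; exact (hφc.norm.pow 2))
  have hI : 0 < ∫ t in a..b, 1 / p t := by
    rw [intervalIntegral.integral_of_le hab', setIntegral_pos_iff_support_of_nonneg_ae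
      (by filter_upwards [hp_pos] with t ht using (one_div_pos.2 ht).le) hp_int]
    have e : (Function.support (fun t => 1 / p t) ∩ Set.Ioc a b : Set ℝ) =ᵐ[volume]
        Set.Ioc a b := by
      have h := (ae_restrict_iff' measurableSet_Ioc).1 hp_pos
      filter_upwards [h] with t ht
      apply propext
      change (t ∈ Function.support (fun t => 1 / p t) ∧ t ∈ Set.Ioc a b) ↔ t ∈ Set.Ioc a b
      exact ⟨fun h => h.2, fun h => ⟨(one_div_pos.2 (ht h)).ne', h⟩⟩
    rw [measure_congr e]
    simp [hab]
  have hE := energy_prim hab' hφP huP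
  -- energy identity
  have hEb := hE.2 b (Set.right_mem_Icc.2 hab')
  beta_reduce at hEb
  have hE1 : (r * ‖φ b‖ ^ 2 - l * ‖φ a‖ ^ 2 : ℝ)
      = (((∫ t in a..b, ‖u t‖ ^ 2 / p t) + ∫ t in a..b, q t * ‖φ t‖ ^ 2 : ℝ) : ℂ)
        - lam * ((∫ t in a..b, w t * ‖φ t‖ ^ 2 : ℝ) : ℂ) := by
    rw [← intervalIntegral.integral_add hu2 hq2]
    rw [intervalIntegral.integral_sub, intervalIntegral.integral_const_mul,
      intervalIntegral.integral_ofReal, intervalIntegral.integral_ofReal] at hEb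
    · rw [hua, hub, mul_assoc, mul_assoc, Complex.mul_conj, Complex.mul_conj,
        Complex.normSq_eq_norm_sq, Complex.normSq_eq_norm_sq] at hEb
      push_cast at hEb ⊢
      rw [hEb]; ring
    · exact ⟨(hu2.add hq2).1.ofReal, (hu2.add hq2).2.ofReal⟩
    · exact IntervalIntegrable.const_mul ⟨hw2.1.ofReal, hw2.2.ofReal⟩ lam
  have hw0 : ∫ t in a..b, w t * ‖φ t‖ ^ 2 = 0 := by
    have := congrArg Complex.im hE1
    simp only [Complex.ofReal_im, Complex.sub_im, Complex.mul_im, Complex.ofReal_re] at this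
    have h2 : lam.im * ∫ t in a..b, w t * ‖φ t‖ ^ 2 = 0 := by linarith
    exact (mul_eq_zero.1 h2).resolve_left hlam
  have hD2 : ∫ t in a..b, ‖u t‖ ^ 2 / p t
      = r * ‖φ b‖ ^ 2 - l * ‖φ a‖ ^ 2 - ∫ t in a..b, q t * ‖φ t‖ ^ 2 := by
    rw [hw0, Complex.ofReal_zero, mul_zero, sub_zero] at hE1
    have := Complex.ofReal_injective hE1
    linarith
  have iqm : IntervalIntegrable (fun t => |min (q t) 0|) volume a b := by
    refine iq.mono_fun (by fun_prop) (Filter.Eventually.of_forall fun t => ?_)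
    simp only [Real.norm_eq_abs, abs_abs]
    rcases le_total (q t) 0 with h | h
    · rw [min_eq_left h]
    · rw [min_eq_right h]; simp
  have hα0 : 0 ≤ α := by
    rw [hα, hc]
    have : 0 ≤ ∫ t in a..b, |min (q t) 0| :=
      intervalIntegral.integral_nonneg hab' fun t _ => abs_nonneg _
    positivity
  have hqM : -(∫ t in a..b, q t * ‖φ t‖ ^ 2) ≤ (∫ t in a..b, |min (q t) 0|) * M ^ 2 := by
    rw [← intervalIntegral.integral_neg, ← intervalIntegral.integral_mul_const]
    refine intervalIntegral.integral_mono_on hab' hq2.neg (iqm.mul_const _) fun t ht => ?_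
    have h1 : -q t ≤ |min (q t) 0| :=
      (neg_le_neg (min_le_left _ _)).trans (neg_le_abs _)
    calc -(q t * ‖φ t‖ ^ 2) = (-q t) * ‖φ t‖ ^ 2 := by ring
      _ ≤ |min (q t) 0| * ‖φ t‖ ^ 2 := by gcongr
      _ ≤ |min (q t) 0| * M ^ 2 := by gcongr; exact hM t ht
  have hD0 : 0 ≤ ∫ t in a..b, ‖u t‖ ^ 2 / p t := by
    rw [intervalIntegral.integral_of_le hab']
    apply integral_nonneg_of_ae
    filter_upwards [hp_pos] with t ht using div_nonneg (by positivity) ht.le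
  have hN0 : 0 ≤ ∫ t in a..b, ‖φ t‖ ^ 2 / p t := by
    rw [intervalIntegral.integral_of_le hab']
    apply integral_nonneg_of_ae
    filter_upwards [hp_pos] with t ht using div_nonneg (by positivity) ht.le
  have hE2 : √(∫ t in a..b, ‖u t‖ ^ 2 / p t) ^ 2 ≤ α * M ^ 2 := by
    rw [Real.sq_sqrt hD0, hD2, hα, hc]
    have h1 : r * ‖φ b‖ ^ 2 ≤ |r| * M ^ 2 :=
      mul_le_mul (le_abs_self r) (hM2 b (Set.right_mem_Icc.2 hab')) (by positivity) (by positivity)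
    have h2 : -l * ‖φ a‖ ^ 2 ≤ |l| * M ^ 2 :=
      mul_le_mul (neg_le_abs l) (hM2 a (Set.left_mem_Icc.2 hab')) (by positivity) (by positivity)
    nlinarith
  have hsup := sup_bound hab' hpm hp_pos iP hφP huc x0 hx0
  obtain ⟨hβ0, hγ0, hDN, hMN, hNpos⟩ := alg_bounds hI hα0 (Real.sqrt_nonneg _) hMpos hβ hγ hE2 hsup
  have hK0 := lower_bound hab' hpm hwm hp_pos iP iw hgc hφc hgw hε
    (δ := 1 / (2 * γ ^ 2)) (by positivity) hM hεcond
  set D := √(∫ t in a..b, ‖u t‖ ^ 2 / p t) with hDdef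
  set N := √(∫ t in a..b, ‖φ t‖ ^ 2 / p t) with hNdef
  set K := ∫ t in a..b, g t * (w t * ‖φ t‖ ^ 2) with hKdef
  set G := √(∫ t in a..b, p t * g' t ^ 2) with hGdef
  set Q := ∫ t in a..b, |q t| with hQdef
  set S := sSup ((fun x => |g x|) '' Set.Icc a b) with hSdef
  have hDsq : D ^ 2 = ∫ t in a..b, ‖u t‖ ^ 2 / p t := Real.sq_sqrt hD0
  have hNsq : N ^ 2 = ∫ t in a..b, ‖φ t‖ ^ 2 / p t := Real.sq_sqrt hN0
  have hK : ε * (N ^ 2 / 2) ≤ K := by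
    refine le_trans ?_ hK0
    rw [← hNsq]
    have h1 : M ^ 2 ≤ (γ * N) ^ 2 := by gcongr
    have h2 : M ^ 2 * (1 / (2 * γ ^ 2)) ≤ (γ * N) ^ 2 * (1 / (2 * γ ^ 2)) := by gcongr
    have h3 : (γ * N) ^ 2 * (1 / (2 * γ ^ 2)) = N ^ 2 / 2 := by field_simp
    have : N ^ 2 / 2 ≤ N ^ 2 - M ^ 2 * (1 / (2 * γ ^ 2)) := by linarith
    gcongr
  -- the sup of g
  have hgS : ∀ x ∈ Set.Icc a b, |g x| ≤ S := fun x hx =>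
    le_csSup (isCompact_Icc.image_of_continuousOn hgc.abs).bddAbove ⟨x, hx, rfl⟩
  have hS0 : 0 ≤ S := (abs_nonneg _).trans (hgS a (Set.left_mem_Icc.2 hab'))
  have hQ0 : 0 ≤ Q := intervalIntegral.integral_nonneg hab' fun t _ => abs_nonneg _
  -- the identity with g
  have hgu := hgP.mul hab' hE
  have hb := hgu.2 b (Set.right_mem_Icc.2 hab')
  beta_reduce at hb
  have iT1 : IntervalIntegrable (fun x => (g' x : ℂ) * (u x * (starRingEnd ℂ) (φ x)))
      volume a b :=
    hgP.1.mul_continuousOn (by rw [hui]; exact hE.continuousOn hab')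
  have iR : IntervalIntegrable (fun t => g t * (‖u t‖ ^ 2 / p t + q t * ‖φ t‖ ^ 2))
      volume a b := (hu2.add hq2).continuousOn_mul (by rwa [hui])
  have iK : IntervalIntegrable (fun t => g t * (w t * ‖φ t‖ ^ 2)) volume a b :=
    hw2.continuousOn_mul (by rwa [hui])
  set T : ℂ := ∫ x in a..b, (g' x : ℂ) * (u x * (starRingEnd ℂ) (φ x)) with hTdef
  set R : ℝ := ∫ t in a..b, g t * (‖u t‖ ^ 2 / p t + q t * ‖φ t‖ ^ 2) with hRdef
  have hid : lam * (K : ℂ) = T + (R : ℂ) := by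
    have e : (fun x => (g' x : ℂ) * (u x * (starRingEnd ℂ) (φ x)) + (g x : ℂ) *
        (((‖u x‖ ^ 2 / p x + q x * ‖φ x‖ ^ 2 : ℝ) : ℂ)
        - lam * ((w x * ‖φ x‖ ^ 2 : ℝ) : ℂ))) = fun x =>
        ((g' x : ℂ) * (u x * (starRingEnd ℂ) (φ x))
        + ((g x * (‖u x‖ ^ 2 / p x + q x * ‖φ x‖ ^ 2) : ℝ) : ℂ))
        - lam * ((g x * (w x * ‖φ x‖ ^ 2) : ℝ) : ℂ) := by
      funext x; push_cast; ring
    rw [e, hga, hgb] at hb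
    have iRc : IntervalIntegrable
        (fun x => ((g x * (‖u x‖ ^ 2 / p x + q x * ‖φ x‖ ^ 2) : ℝ) : ℂ)) volume a b :=
      ⟨iR.1.ofReal, iR.2.ofReal⟩
    have iKc : IntervalIntegrable
        (fun x => ((g x * (w x * ‖φ x‖ ^ 2) : ℝ) : ℂ)) volume a b :=
      ⟨iK.1.ofReal, iK.2.ofReal⟩
    rw [intervalIntegral.integral_sub (iT1.add iRc) (iKc.const_mul lam),
      intervalIntegral.integral_add iT1 iRc, intervalIntegral.integral_const_mul,
      intervalIntegral.integral_ofReal, intervalIntegral.integral_ofReal] at hb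
    simp only [Complex.ofReal_zero, zero_mul, zero_add] at hb
    exact (sub_eq_zero.1 hb.symm).symm
  have hT : ‖T‖ ≤ M * (G * D) := by
    have hcs := cs_weight (μ := volume.restrict (Set.Ioc a b)) (p := p)
      (A := fun t => ‖u t‖) (B := fun t => p t * |g' t|) hpm hp_pos
      (fun x => norm_nonneg _)
      (fun x => (le_total 0 (p x)).imp (fun h => mul_nonneg h (abs_nonneg _)) id)
      ((huc.mono Set.Ioc_subset_Icc_self).norm.aestronglyMeasurable measurableSet_Ioc)
      (by fun_prop) hu2.1
      (hg'2.congr (by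
        filter_upwards [hp_pos] with x hx
        rw [mul_pow, sq_abs]; field_simp))
    have e1 : ∫ x in Set.Ioc a b, (p x * |g' x|) ^ 2 / p x
        = ∫ x in Set.Ioc a b, p x * g' x ^ 2 := by
      refine integral_congr_ae ?_
      filter_upwards [hp_pos] with x hx
      rw [mul_pow, sq_abs]; field_simp
    simp only [e1, ← intervalIntegral.integral_of_le hab', ← hDdef, ← hGdef] at hcs
    have h2 : ‖T‖ ≤ ∫ x in Set.Ioc a b, M * (‖u x‖ * (p x * |g' x|) / p x) := by
      refine (intervalIntegral.norm_integral_le_integral_norm hab').trans ?_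
      rw [intervalIntegral.integral_of_le hab']
      refine integral_mono_ae iT1.norm.1 (hcs.1.const_mul M) ?_
      filter_upwards [hp_pos, ae_restrict_mem measurableSet_Ioc] with x hx hxm
      have h3 := hM x (Set.Ioc_subset_Icc_self hxm)
      have h4 : ‖u x‖ * (p x * |g' x|) / p x = ‖u x‖ * |g' x| := by field_simp
      rw [h4]
      simp only [norm_mul, RCLike.norm_conj, Complex.norm_real, Real.norm_eq_abs]
      calc |g' x| * (‖u x‖ * ‖φ x‖) = ‖φ x‖ * (‖u x‖ * |g' x|) := by ring
        _ ≤ M * (‖u x‖ * |g' x|) := by gcongr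
    rw [integral_const_mul] at h2
    have h5 := mul_le_mul_of_nonneg_left hcs.2 hMpos.le
    rw [intervalIntegral.integral_of_le hab'] at h5
    linarith [mul_comm D G]
  have hR : |R| ≤ S * (D ^ 2 + Q * M ^ 2) := by
    have h1 : |R| ≤ ∫ t in a..b, S * (‖u t‖ ^ 2 / p t + |q t| * M ^ 2) := by
      refine (intervalIntegral.abs_integral_le_integral_abs hab').trans ?_
      rw [intervalIntegral.integral_of_le hab', intervalIntegral.integral_of_le hab']
      refine integral_mono_ae iR.abs.1 ((hu2.add (iq.abs.mul_const _)).const_mul S).1 ?_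
      filter_upwards [hp_pos, ae_restrict_mem measurableSet_Ioc] with x hx hxm
      have hxm' := Set.Ioc_subset_Icc_self hxm
      rw [abs_mul]
      refine mul_le_mul (hgS x hxm') ?_ (abs_nonneg _) hS0
      refine (abs_add_le _ _).trans ?_
      rw [abs_of_nonneg (div_nonneg (sq_nonneg ‖u x‖) hx.le), abs_mul, abs_of_nonneg (sq_nonneg ‖φ x‖)]
      have := hM2 x hxm'
      gcongr
    rw [intervalIntegral.integral_const_mul, intervalIntegral.integral_add hu2
      (iq.abs.mul_const _), intervalIntegral.integral_mul_const, ← hDsq] at h1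
    exact h1
  have hKpos : 0 ≤ K := le_trans (by positivity) hK
  have him : lam.im * K = T.im := by
    have := congrArg Complex.im hid
    simpa using this
  have hre : lam.re * K = T.re + R := by
    have := congrArg Complex.re hid
    simpa using this
  constructor
  · have := alg_final (Q := Q) (S := 0) hε hNpos (Real.sqrt_nonneg _) hMpos.le
      (Real.sqrt_nonneg (∫ t in a..b, p t * g' t ^ 2)) le_rfl hQ0 (abs_nonneg lam.im) hK hDN hMN
      hγ0.le (by
        rw [← abs_of_nonneg hKpos, ← abs_mul, him]
        have := (Complex.abs_im_le_norm T).trans hT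
        linarith)
    rw [← hGdef] at this
    calc |lam.im| ≤ _ := this
      _ = _ := by ring
  · refine alg_final hε hNpos (Real.sqrt_nonneg _) hMpos.le
      (Real.sqrt_nonneg _) hS0 hQ0 (abs_nonneg lam.re) hK hDN hMN hγ0.le ?_
    rw [← abs_of_nonneg hKpos, ← abs_mul, hre]
    exact (abs_add_le _ _).trans (add_le_add ((Complex.abs_re_le_norm T).trans hT) hR)
end

section
/- Assume ∫ₐᵇ w ≠ 0 and set δ := 2 + 2‖w‖_{L¹}/|∫ₐᵇ w|. Let λ ∈ ℂ with Im λ ≠ 0 and let (φ, u) be a solution of −(pφ')' + qφ = λwφ on [a,b] satisfying separated self-adjoint boundary conditions u(a) = l·φ(a), u(b) = r·φ(b) with l, r ∈ ℝ. Then ‖φ'‖_{p,2} ≤ α·δ·‖φ‖_{1/p,2} and ‖φ‖_∞ ≤ √α·δ·‖φ‖_{1/p,2}, where α := |l| + |r| + ‖q₋‖_{L¹}. -/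
open MeasureTheory Real Complex

/-- Product rule for primitives of integrable real functions. -/
lemma prim_mul (a b : ℝ) (hab : a ≤ b) (F G f g : ℝ → ℝ)
    (hf : IntervalIntegrable f volume a b) (hg : IntervalIntegrable g volume a b)
    (hF : ∀ x ∈ Set.Icc a b, F x = F a + ∫ t in a..x, f t)
    (hG : ∀ x ∈ Set.Icc a b, G x = G a + ∫ t in a..x, g t) :
    ∫ t in a..b, (f t * G t + F t * g t) = F b * G b - F a * G a := by
  have hconst : ∀ c : ℝ, AbsolutelyContinuousOnInterval (fun _ : ℝ => c) a b := fun c =>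
    ((LipschitzWith.const c).lipschitzOnWith (s := Set.uIcc a b)).absolutelyContinuousOnInterval
  have h1 : AbsolutelyContinuousOnInterval (fun x => F a + ∫ t in a..x, f t) a b :=
    (hconst (F a)).fun_add (hf.absolutelyContinuousOnInterval_intervalIntegral (c := a) (by simp))
  have h2 : AbsolutelyContinuousOnInterval (fun x => G a + ∫ t in a..x, g t) a b :=
    (hconst (G a)).fun_add (hg.absolutelyContinuousOnInterval_intervalIntegral (c := a) (by simp))
  have h := h1.integral_deriv_mul_eq_sub h2
  have hb : b ∈ Set.Icc a b := ⟨hab, le_rfl⟩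
  have ha : a ∈ Set.Icc a b := ⟨le_rfl, hab⟩
  rw [← hF b hb, ← hG b hb, ← hF a ha, ← hG a ha] at h
  rw [← h]
  apply intervalIntegral.integral_congr_ae
  filter_upwards [hf.ae_hasDerivAt_integral, hg.ae_hasDerivAt_integral] with x hx₁ hx₂ hx₃
  have hx₄ : x ∈ Set.uIcc a b := Set.uIoc_subset_uIcc hx₃
  have hx₅ : x ∈ Set.Icc a b := by rwa [Set.uIcc_of_le hab] at hx₄
  have d1 := ((hx₁ hx₄ a (by simp)).const_add (F a)).deriv
  have d2 := ((hx₂ hx₄ a (by simp)).const_add (G a)).deriv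
  rw [d1, d2, ← hF x hx₅, ← hG x hx₅]

/-- Cauchy–Schwarz with a weight. -/
lemma cs_weight_s11 (a b : ℝ) (hab : a ≤ b) (k f g : ℝ → ℝ)
    (hk : ∀ᵐ x ∂(volume.restrict (Set.Ioc a b)), 0 ≤ k x)
    (hff : IntervalIntegrable (fun t => f t ^ 2 * k t) volume a b)
    (hgg : IntervalIntegrable (fun t => g t ^ 2 * k t) volume a b)
    (hfg : IntervalIntegrable (fun t => f t * g t * k t) volume a b) :
    ∫ t in a..b, f t * g t * k t ≤
      Real.sqrt (∫ t in a..b, f t ^ 2 * k t) * Real.sqrt (∫ t in a..b, g t ^ 2 * k t) := by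
  have hnn : ∀ h : ℝ → ℝ, 0 ≤ ∫ t in a..b, h t ^ 2 * k t := by
    intro h
    rw [intervalIntegral.integral_of_le hab]
    apply integral_nonneg_of_ae
    filter_upwards [hk] with x hx
    exact mul_nonneg (sq_nonneg _) hx
  have key : ∀ s : ℝ, 0 ≤ (∫ t in a..b, f t ^ 2 * k t) * (s * s)
      + (-2 * ∫ t in a..b, f t * g t * k t) * s + ∫ t in a..b, g t ^ 2 * k t := by
    intro s
    have h := hnn (fun t => s * f t - g t)
    have e : ∫ t in a..b, (s * f t - g t) ^ 2 * k t =
        ∫ t in a..b, ((s * s) * (f t ^ 2 * k t) + (-2 * s) * (f t * g t * k t) + g t ^ 2 * k t) := by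
      congr 1; ext t; ring
    rw [e, intervalIntegral.integral_add ((hff.const_mul _).add (hfg.const_mul _)) hgg,
      intervalIntegral.integral_add (hff.const_mul _) (hfg.const_mul _),
      intervalIntegral.integral_const_mul, intervalIntegral.integral_const_mul] at h
    linarith
  have hd := discrim_le_zero key
  unfold discrim at hd
  rw [← Real.sqrt_mul (hnn f)]
  apply Real.le_sqrt_of_sq_le
  nlinarith

lemma reIm_int (a b : ℝ) (F f : ℝ → ℂ) (hab : a ≤ b) (hf : IntervalIntegrable f volume a b)
    (hF : ∀ x ∈ Set.Icc a b, F x = F a + ∫ t in a..x, f t) :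
    (∀ x ∈ Set.Icc a b, (F x).re = (F a).re + ∫ t in a..x, (f t).re) ∧
    (∀ x ∈ Set.Icc a b, (F x).im = (F a).im + ∫ t in a..x, (f t).im) ∧
    IntervalIntegrable (fun t => (f t).re) volume a b ∧
    IntervalIntegrable (fun t => (f t).im) volume a b := by
  have hi : ∀ x ∈ Set.Icc a b, IntervalIntegrable f volume a x := fun x hx =>
    hf.mono_set (by rw [Set.uIcc_of_le hab, Set.uIcc_of_le hx.1]; exact Set.Icc_subset_Icc le_rfl hx.2)
  refine ⟨fun x hx => ?_, fun x hx => ?_, ?_, ?_⟩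
  · have h := Complex.reCLM.intervalIntegral_comp_comm (hi x hx)
    simp only [Complex.reCLM_apply] at h
    rw [h, hF x hx, Complex.add_re]
  · have h := Complex.imCLM.intervalIntegral_comp_comm (hi x hx)
    simp only [Complex.imCLM_apply] at h
    rw [h, hF x hx, Complex.add_im]
  · rw [intervalIntegrable_iff] at hf ⊢
    exact hf.re
  · rw [intervalIntegrable_iff] at hf ⊢
    exact hf.im

/-- Lemma 3.4 of the paper for separated self-adjoint boundary conditions:
if ∫ₐᵇ w ≠ 0, then for a non-real eigenvalue λ with solution (φ, u),
‖φ'‖_{p,2} ≤ α·δ·‖φ‖_{1/p,2} and ‖φ‖_∞ ≤ √α·δ·‖φ‖_{1/p,2}. -/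
theorem eigenfunction_norm_estimates_delta_separated
    (a b : ℝ) (hab : a < b) (p q w : ℝ → ℝ)
    (hpm : Measurable p) (hqm : Measurable q) (hwm : Measurable w)
    (hp_pos : ∀ᵐ x ∂(volume.restrict (Set.Ioc a b)), 0 < p x)
    (hp_int : IntegrableOn (fun x => 1 / p x) (Set.Ioc a b))
    (hq_int : IntegrableOn q (Set.Ioc a b))
    (hw_int : IntegrableOn w (Set.Ioc a b))
    (hw_ne : ∀ᵐ x ∂(volume.restrict (Set.Ioc a b)), w x ≠ 0)
    (hw0 : (∫ t in a..b, w t) ≠ 0)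
    (δ : ℝ) (hδ : δ = 2 + 2 * (∫ t in a..b, |w t|) / |∫ t in a..b, w t|)
    (lam : ℂ) (hlam : lam.im ≠ 0) (φ u : ℝ → ℂ)
    (hφc : ContinuousOn φ (Set.Icc a b)) (huc : ContinuousOn u (Set.Icc a b))
    (hφ : ∀ x ∈ Set.Icc a b, φ x = φ a + ∫ t in a..x, u t / (p t : ℂ))
    (hu : ∀ x ∈ Set.Icc a b, u x = u a + ∫ t in a..x, ((q t : ℂ) - lam * (w t : ℂ)) * φ t)
    (l r : ℝ) (hbca : u a = (l : ℂ) * φ a) (hbcb : u b = (r : ℂ) * φ b)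
    (α : ℝ) (hα : α = |l| + |r| + ∫ t in a..b, |min (q t) 0|) :
    Real.sqrt (∫ t in a..b, ‖u t‖ ^ 2 / p t)
        ≤ α * δ * Real.sqrt (∫ t in a..b, ‖φ t‖ ^ 2 / p t)
      ∧ sSup ((fun x => ‖φ x‖) '' Set.Icc a b)
        ≤ Real.sqrt α * δ * Real.sqrt (∫ t in a..b, ‖φ t‖ ^ 2 / p t) := by
  have hle : a ≤ b := hab.le
  have ha : a ∈ Set.Icc a b := ⟨le_rfl, hle⟩
  have hb : b ∈ Set.Icc a b := ⟨hle, le_rfl⟩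
  have hU : Set.uIcc a b = Set.Icc a b := Set.uIcc_of_le hle
  have hk : IntervalIntegrable (fun x => 1 / p x) volume a b :=
    (intervalIntegrable_iff_integrableOn_Ioc_of_le hle).2 hp_int
  have hq : IntervalIntegrable q volume a b :=
    (intervalIntegrable_iff_integrableOn_Ioc_of_le hle).2 hq_int
  have hw : IntervalIntegrable w volume a b :=
    (intervalIntegrable_iff_integrableOn_Ioc_of_le hle).2 hw_int
  have hkpos : ∀ᵐ x ∂(volume.restrict (Set.Ioc a b)), 0 ≤ 1 / p x := by
    filter_upwards [hp_pos] with x hx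
    positivity
  -- continuity of components
  have cφr : ContinuousOn (fun x => (φ x).re) (Set.uIcc a b) := by
    rw [hU]; exact Complex.continuous_re.comp_continuousOn hφc
  have cφi : ContinuousOn (fun x => (φ x).im) (Set.uIcc a b) := by
    rw [hU]; exact Complex.continuous_im.comp_continuousOn hφc
  have cur : ContinuousOn (fun x => (u x).re) (Set.uIcc a b) := by
    rw [hU]; exact Complex.continuous_re.comp_continuousOn huc
  have cui : ContinuousOn (fun x => (u x).im) (Set.uIcc a b) := by
    rw [hU]; exact Complex.continuous_im.comp_continuousOn huc
  have cφn : ContinuousOn (fun x => ‖φ x‖) (Set.uIcc a b) := by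
    rw [hU]; exact hφc.norm
  have cun : ContinuousOn (fun x => ‖u x‖) (Set.uIcc a b) := by
    rw [hU]; exact huc.norm
  have nsq : ∀ z : ℂ, ‖z‖ ^ 2 = z.re * z.re + z.im * z.im := fun z => by
    rw [Complex.sq_norm, Complex.normSq_apply]
  -- primitives
  have toC : ∀ f : ℝ → ℝ, IntervalIntegrable f volume a b →
      IntervalIntegrable (fun x => (f x : ℂ)) volume a b := fun f hf => by
    rw [intervalIntegrable_iff] at hf ⊢
    exact hf.ofReal
  have hkc : IntervalIntegrable (fun x => u x / (p x : ℂ)) volume a b := by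
    have h := (toC _ hk).continuousOn_mul (g := u) (by rwa [hU])
    have e : (fun x => u x / (p x : ℂ)) = fun x => u x * ((1 / p x : ℝ) : ℂ) := by
      ext x; simp [div_eq_mul_inv]
    rw [e]; exact h
  have hgc : IntervalIntegrable (fun t => ((q t : ℂ) - lam * (w t : ℂ)) * φ t) volume a b := by
    exact (((toC _ hq)).sub ((toC _ hw).const_mul lam)).mul_continuousOn
      (by rwa [hU])
  obtain ⟨φr, φi, iφr, iφi⟩ := reIm_int a b φ _ hle hkc hφ
  obtain ⟨ur, ui, iur, iui⟩ := reIm_int a b u _ hle hgc hu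
  have edr : ∀ t, (u t / (p t : ℂ)).re = (u t).re * (1 / p t) := fun t => by
    rw [Complex.div_ofReal_re]; ring
  have edi : ∀ t, (u t / (p t : ℂ)).im = (u t).im * (1 / p t) := fun t => by
    rw [Complex.div_ofReal_im]; ring
  simp only [edr] at φr iφr
  simp only [edi] at φi iφi
  -- integrability
  have iI : IntervalIntegrable (fun t => ‖φ t‖ * ‖u t‖ * (1 / p t)) volume a b :=
    hk.continuousOn_mul (cφn.mul cun)
  have iN : IntervalIntegrable (fun t => ‖φ t‖ ^ 2 * (1 / p t)) volume a b :=
    hk.continuousOn_mul (cφn.pow 2)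
  have iD : IntervalIntegrable (fun t => ‖u t‖ ^ 2 * (1 / p t)) volume a b :=
    hk.continuousOn_mul (cun.pow 2)
  have iq : IntervalIntegrable (fun t => q t * ‖φ t‖ ^ 2) volume a b :=
    hq.mul_continuousOn (cφn.pow 2)
  have iw : IntervalIntegrable (fun t => w t * ‖φ t‖ ^ 2) volume a b :=
    hw.mul_continuousOn (cφn.pow 2)
  -- imaginary part identity
  have hwφ : ∫ t in a..b, w t * ‖φ t‖ ^ 2 = 0 := by
    have h1 := prim_mul a b hle _ _ _ _ iui iφr ui φr
    have h2 := prim_mul a b hle _ _ _ _ iur iφi ur φi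
    have j1 := (iui.mul_continuousOn cφr).add (iφr.continuousOn_mul cui)
    have j2 := (iur.mul_continuousOn cφi).add (iφi.continuousOn_mul cur)
    have h3 := intervalIntegral.integral_sub j1 j2
    rw [h1, h2] at h3
    have h4 : ∫ t in a..b, -lam.im * (w t * ‖φ t‖ ^ 2) = 0 := by
      refine Eq.trans ?_ (h3.trans ?_)
      · congr 1; ext t
        rw [nsq]
        simp
        ring
      · rw [hbca, hbcb]; simp; ring
    rw [intervalIntegral.integral_const_mul] at h4
    rcases mul_eq_zero.1 h4 with h | h
    · exact absurd (neg_eq_zero.1 h) hlam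
    · exact h
  -- real part identity
  have hRe : ∫ t in a..b, ‖u t‖ ^ 2 * (1 / p t) =
      r * ‖φ b‖ ^ 2 - l * ‖φ a‖ ^ 2 - ∫ t in a..b, q t * ‖φ t‖ ^ 2 := by
    have h1 := prim_mul a b hle _ _ _ _ iur iφr ur φr
    have h2 := prim_mul a b hle _ _ _ _ iui iφi ui φi
    have j1 := (iur.mul_continuousOn cφr).add (iφr.continuousOn_mul cur)
    have j2 := (iui.mul_continuousOn cφi).add (iφi.continuousOn_mul cui)
    have h3 := intervalIntegral.integral_add j1 j2
    rw [h1, h2] at h3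
    have h4 : ∫ t in a..b, (q t * ‖φ t‖ ^ 2 + (-lam.re) * (w t * ‖φ t‖ ^ 2)
        + ‖u t‖ ^ 2 * (1 / p t)) = r * ‖φ b‖ ^ 2 - l * ‖φ a‖ ^ 2 := by
      refine Eq.trans ?_ (h3.trans ?_)
      · congr 1; ext t
        rw [nsq, nsq]
        simp
        ring
      · rw [hbca, hbcb, nsq, nsq]; simp; ring
    rw [intervalIntegral.integral_add (iq.add (iw.const_mul _)) iD,
      intervalIntegral.integral_add iq (iw.const_mul _), intervalIntegral.integral_const_mul,
      hwφ] at h4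
    linarith
  -- variation of |φ|²
  set I := ∫ t in a..b, ‖φ t‖ * ‖u t‖ * (1 / p t) with hI
  have iV : IntervalIntegrable
      (fun t => 2 * ((φ t).re * (u t).re + (φ t).im * (u t).im) * (1 / p t)) volume a b :=
    hk.continuousOn_mul (continuousOn_const.mul ((cφr.mul cur).add (cφi.mul cui)))
  have hsub : ∀ x ∈ Set.Icc a b, Set.uIcc a x ⊆ Set.uIcc a b := fun x hx => by
    rw [hU, Set.uIcc_of_le hx.1]; exact Set.Icc_subset_Icc le_rfl hx.2
  have hV : ∀ x ∈ Set.Icc a b, ‖φ x‖ ^ 2 - ‖φ a‖ ^ 2 =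
      ∫ t in a..x, 2 * ((φ t).re * (u t).re + (φ t).im * (u t).im) * (1 / p t) := by
    intro x hx
    have hs := hsub x hx
    have mr := iφr.mono_set hs
    have mi := iφi.mono_set hs
    have pr : ∀ y ∈ Set.Icc a x, (φ y).re = (φ a).re + ∫ t in a..y, (u t).re * (1 / p t) :=
      fun y hy => φr y ⟨hy.1, hy.2.trans hx.2⟩
    have pi' : ∀ y ∈ Set.Icc a x, (φ y).im = (φ a).im + ∫ t in a..y, (u t).im * (1 / p t) :=
      fun y hy => φi y ⟨hy.1, hy.2.trans hx.2⟩
    have h1 := prim_mul a x hx.1 _ _ _ _ mr mr pr pr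
    have h2 := prim_mul a x hx.1 _ _ _ _ mi mi pi' pi'
    have j1 := (mr.mul_continuousOn (cφr.mono hs)).add (mr.continuousOn_mul (cφr.mono hs))
    have j2 := (mi.mul_continuousOn (cφi.mono hs)).add (mi.continuousOn_mul (cφi.mono hs))
    have h3 := intervalIntegral.integral_add j1 j2
    rw [h1, h2] at h3
    symm
    refine Eq.trans ?_ (h3.trans ?_)
    · congr 1; ext t; ring
    · rw [nsq, nsq]; ring
  have hVb : ∀ x ∈ Set.Icc a b, ∀ y ∈ Set.Icc a b, |‖φ y‖ ^ 2 - ‖φ x‖ ^ 2| ≤ 2 * I := by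
    have main : ∀ x ∈ Set.Icc a b, ∀ y ∈ Set.Icc a b, x ≤ y →
        |‖φ y‖ ^ 2 - ‖φ x‖ ^ 2| ≤ 2 * I := by
      intro x hx y hy hxy
      have e : ‖φ y‖ ^ 2 - ‖φ x‖ ^ 2 =
          ∫ t in x..y, 2 * ((φ t).re * (u t).re + (φ t).im * (u t).im) * (1 / p t) := by
        rw [← intervalIntegral.integral_interval_sub_left (iV.mono_set (hsub y hy))
          (iV.mono_set (hsub x hx)), ← hV x hx, ← hV y hy]
        ring
      rw [e, ← Real.norm_eq_abs]
      have hae : ∀ᵐ t ∂(volume.restrict (Set.Ioc a b)),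
          ‖2 * ((φ t).re * (u t).re + (φ t).im * (u t).im) * (1 / p t)‖
            ≤ 2 * (‖φ t‖ * ‖u t‖ * (1 / p t)) := by
        filter_upwards [hkpos] with t ht
        rw [norm_mul, norm_mul, Real.norm_of_nonneg ht]
        have h1 : |(φ t).re * (u t).re + (φ t).im * (u t).im| ≤ ‖φ t‖ * ‖u t‖ := by
          refine abs_le_of_sq_le_sq ?_ (by positivity)
          rw [mul_pow, nsq, nsq]
          nlinarith [sq_nonneg ((φ t).re * (u t).im - (φ t).im * (u t).re)]
        rw [Real.norm_eq_abs ((φ t).re * (u t).re + (φ t).im * (u t).im)]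
        norm_num
        have ht' : 0 ≤ (p t)⁻¹ := by simpa using ht
        have := mul_le_mul_of_nonneg_right h1 ht'
        linarith
      have hss : Set.Ioc x y ⊆ Set.Ioc a b := Set.Ioc_subset_Ioc hx.1 hy.2
      rw [intervalIntegral.integral_of_le hxy, hI, ← intervalIntegral.integral_const_mul,
        intervalIntegral.integral_of_le hle]
      have iI2 := (intervalIntegrable_iff_integrableOn_Ioc_of_le hle).1 (iI.const_mul 2)
      refine (norm_integral_le_of_norm_le (iI2.mono_set hss)
        (ae_restrict_of_ae_restrict_of_subset hss hae)).trans ?_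
      refine setIntegral_mono_set iI2 ?_ (Filter.Eventually.of_forall hss)
      filter_upwards [hkpos] with t ht
      exact mul_nonneg zero_le_two (mul_nonneg (by positivity) ht)
    intro x hx y hy
    rcases le_total x y with h | h
    · exact main x hx y hy h
    · rw [abs_sub_comm]; exact main y hy x hx h
  -- maximum
  obtain ⟨x₀, hx₀, hmax⟩ := isCompact_Icc.exists_isMaxOn ⟨a, ha⟩ hφc.norm
  have hmax' : ∀ x ∈ Set.Icc a b, ‖φ x‖ ≤ ‖φ x₀‖ := fun x hx => hmax hx
  set M := ‖φ x₀‖ with hM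
  have hM0 : 0 ≤ M := norm_nonneg _
  have hsq : ∀ x ∈ Set.Icc a b, ‖φ x‖ ^ 2 ≤ M ^ 2 := fun x hx =>
    pow_le_pow_left₀ (norm_nonneg _) (hmax' x hx) 2
  have hI0 : 0 ≤ I := by
    have := (abs_nonneg _).trans (hVb a ha b hb)
    linarith
  have hMw : M ^ 2 * |∫ t in a..b, w t| ≤ (∫ t in a..b, |w t|) * (2 * I) := by
    have e : M ^ 2 * (∫ t in a..b, w t) = ∫ t in a..b, w t * (M ^ 2 - ‖φ t‖ ^ 2) := by
      have : ∫ t in a..b, w t * (M ^ 2 - ‖φ t‖ ^ 2)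
          = ∫ t in a..b, (M ^ 2 * w t - w t * ‖φ t‖ ^ 2) := by
        congr 1; ext t; ring
      rw [this, intervalIntegral.integral_sub (hw.const_mul _) iw,
        intervalIntegral.integral_const_mul, hwφ, sub_zero]
    have e2 : M ^ 2 * |∫ t in a..b, w t| = |∫ t in a..b, w t * (M ^ 2 - ‖φ t‖ ^ 2)| := by
      rw [← e, abs_mul, abs_of_nonneg (sq_nonneg M)]
    rw [e2, ← intervalIntegral.integral_mul_const, ← Real.norm_eq_abs]
    apply intervalIntegral.norm_integral_le_of_norm_le hle _ (hw.abs.mul_const _)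
    refine Filter.Eventually.of_forall fun t ht => ?_
    rw [norm_mul, Real.norm_eq_abs, Real.norm_eq_abs]
    exact mul_le_mul_of_nonneg_left (hVb t ⟨ht.1.le, ht.2⟩ x₀ hx₀) (abs_nonneg _)
  have hWpos : 0 < |∫ t in a..b, w t| := abs_pos.2 hw0
  have hw1 : 0 ≤ ∫ t in a..b, |w t| :=
    intervalIntegral.integral_nonneg hle fun t _ => abs_nonneg _
  have hδ0 : 0 ≤ δ := by rw [hδ]; positivity
  have hMI : M ^ 2 ≤ δ * I := by
    have : M ^ 2 ≤ 2 * (∫ t in a..b, |w t|) / |∫ t in a..b, w t| * I := by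
      rw [div_mul_eq_mul_div, le_div_iff₀ hWpos]
      linarith
    rw [hδ]; linarith
  have hα0 : 0 ≤ α := by
    rw [hα]
    have := intervalIntegral.integral_nonneg (μ := volume) (f := fun t => |min (q t) 0|) hle
      fun t _ => abs_nonneg _
    positivity
  have hDM : ∫ t in a..b, ‖u t‖ ^ 2 * (1 / p t) ≤ α * M ^ 2 := by
    have iqm : IntervalIntegrable (fun t => |min (q t) 0|) volume a b := by
      rw [intervalIntegrable_iff] at hq ⊢
      exact (hq.inf (integrable_zero _ _ _)).abs
    have h1 : - ∫ t in a..b, q t * ‖φ t‖ ^ 2 ≤ (∫ t in a..b, |min (q t) 0|) * M ^ 2 := by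
      rw [← intervalIntegral.integral_neg, ← intervalIntegral.integral_mul_const]
      apply intervalIntegral.integral_mono_on hle iq.neg (iqm.mul_const _)
      intro t ht
      have e1 : - q t ≤ |min (q t) 0| :=
        (neg_le_neg (min_le_left (q t) 0)).trans (neg_le_abs _)
      have e2 := mul_le_mul_of_nonneg_right e1 (sq_nonneg ‖φ t‖)
      have e3 := mul_le_mul_of_nonneg_left (hsq t ht) (abs_nonneg (min (q t) 0))
      change -(q t * ‖φ t‖ ^ 2) ≤ _
      linarith
    have h2 : r * ‖φ b‖ ^ 2 ≤ |r| * M ^ 2 :=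
      (mul_le_mul_of_nonneg_right (le_abs_self r) (sq_nonneg _)).trans
        (mul_le_mul_of_nonneg_left (hsq b hb) (abs_nonneg _))
    have h3 : -l * ‖φ a‖ ^ 2 ≤ |l| * M ^ 2 :=
      (mul_le_mul_of_nonneg_right (neg_le_abs l) (sq_nonneg _)).trans
        (mul_le_mul_of_nonneg_left (hsq a ha) (abs_nonneg _))
    rw [hRe, hα]
    linarith
  have hcs := cs_weight_s11 a b hle (fun t => 1 / p t) (fun t => ‖φ t‖) (fun t => ‖u t‖)
    hkpos iN iD iI
  have eN : ∫ t in a..b, ‖φ t‖ ^ 2 / p t = ∫ t in a..b, ‖φ t‖ ^ 2 * (1 / p t) := by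
    congr 1; ext t; ring
  have eD : ∫ t in a..b, ‖u t‖ ^ 2 / p t = ∫ t in a..b, ‖u t‖ ^ 2 * (1 / p t) := by
    congr 1; ext t; ring
  rw [eN, eD]
  have hDs : Real.sqrt (∫ t in a..b, ‖u t‖ ^ 2 * (1 / p t)) ≤ Real.sqrt α * M := by
    refine (Real.sqrt_le_sqrt hDM).trans ?_
    rw [Real.sqrt_mul hα0, Real.sqrt_sq hM0]
  set N := Real.sqrt (∫ t in a..b, ‖φ t‖ ^ 2 * (1 / p t)) with hN
  set D := Real.sqrt (∫ t in a..b, ‖u t‖ ^ 2 * (1 / p t)) with hD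
  have hN0 : 0 ≤ N := Real.sqrt_nonneg _
  have hsα : 0 ≤ Real.sqrt α := Real.sqrt_nonneg _
  have hfin : M ≤ Real.sqrt α * δ * N := by
    rcases hM0.eq_or_lt with h | h
    · rw [← h]; positivity
    · have h1 : I ≤ N * (Real.sqrt α * M) := hcs.trans (mul_le_mul_of_nonneg_left hDs hN0)
      have h2 := mul_le_mul_of_nonneg_left h1 hδ0
      have h3 : M * M ≤ (Real.sqrt α * δ * N) * M := by nlinarith
      exact le_of_mul_le_mul_right h3 h
  constructor
  · refine hDs.trans ((mul_le_mul_of_nonneg_left hfin hsα).trans (le_of_eq ?_))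
    have := Real.mul_self_sqrt hα0
    calc Real.sqrt α * (Real.sqrt α * δ * N) = (Real.sqrt α * Real.sqrt α) * δ * N := by ring
      _ = α * δ * N := by rw [this]
  · refine (csSup_le ⟨_, Set.mem_image_of_mem _ ha⟩ ?_).trans hfin
    rintro _ ⟨x, hx, rfl⟩
    exact hmax' x hx
end
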